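/- arXiv:math/0305124 — 2 statements merged into one kernel-verified Lean document; each statement's English description precedes it below -/
import Mathlib

section
/- Let β be an alternating 2-form on ℝ⁷ satisfying Σ_{j,k=1}^{7} ε_{ijk} β(e_j,e_k) = 0 for every i ∈ {1,…,7}. Then |β∧β + (1/7)|β|²·ψ|² = (6/7)|β|⁴, where |β|² := Σ_{a<b} β(e_a,e_b)² and the squared norm of a 4-form ξ is |ξ|² := Σ_{a<b<c<d} ξ(e_a,e_b,e_c,e_d)². In particular, the Λ⁴₂₇-component β∧β + (1/7)|β|²·ψ of β∧β vanishes only if β = 0. -/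
open scoped BigOperators Matrix

noncomputable section

namespace G2

/-- The standard basis vector `e i` of `ℝ⁷`. -/
def e (i : Fin 7) : Fin 7 → ℝ := fun j => if j = i then 1 else 0

/-- The 3-form `e^a ∧ e^b ∧ e^c` (determinant convention), evaluated on `(x, y, z)`. -/
def w3 (a b c : Fin 7) (x y z : Fin 7 → ℝ) : ℝ :=
  x a * (y b * z c - y c * z b) - x b * (y a * z c - y c * z a)
    + x c * (y a * z b - y b * z a)

/-- The 4-form `e^a ∧ e^b ∧ e^c ∧ e^d`, evaluated on `(x, y, z, w)`. -/
def w4 (a b c d : Fin 7) (x y z w : Fin 7 → ℝ) : ℝ :=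
  Matrix.det !![x a, x b, x c, x d; y a, y b, y c, y d;
                z a, z b, z c, z d; w a, w b, w c, w d]

/-- The fundamental `G₂` 3-form
`φ = e^{123}+e^{145}+e^{167}+e^{246}-e^{257}-e^{347}-e^{356}` (indices shifted to start at 0),
as a trilinear alternating function of three vectors. -/
def phi (x y z : Fin 7 → ℝ) : ℝ :=
  w3 0 1 2 x y z + w3 0 3 4 x y z + w3 0 5 6 x y z + w3 1 3 5 x y z
    - w3 1 4 6 x y z - w3 2 3 6 x y z - w3 2 4 5 x y z

/-- The 4-form `ψ = *φ = e^{4567}+e^{2367}+e^{2345}+e^{1357}-e^{1346}-e^{1256}-e^{1247}`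
(indices shifted to start at 0), as a function of four vectors. -/
def psi (x y z w : Fin 7 → ℝ) : ℝ :=
  w4 3 4 5 6 x y z w + w4 1 2 5 6 x y z w + w4 1 2 3 4 x y z w + w4 0 2 4 6 x y z w
    - w4 0 2 3 5 x y z w - w4 0 1 4 5 x y z w - w4 0 1 3 6 x y z w

/-- `ε_{ijk} = φ(e_i, e_j, e_k)`. -/
def eps (i j k : Fin 7) : ℝ := phi (e i) (e j) (e k)

/-- `ε_{ijkl} = ψ(e_i, e_j, e_k, e_l)`. -/
def eps4 (i j k l : Fin 7) : ℝ := psi (e i) (e j) (e k) (e l)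

/-- The volume form `e^1 ∧ ⋯ ∧ e^7`, evaluated on a 7-tuple of vectors. -/
def vol (v : Fin 7 → (Fin 7 → ℝ)) : ℝ := Matrix.det (Matrix.of fun i j => v i j)

/-- The matrix `[v]` with `[v]_{ij} = Σ_k ε_{ijk} v_k`. -/
def bracket (v : Fin 7 → ℝ) : Matrix (Fin 7) (Fin 7) ℝ :=
  Matrix.of fun i j => ∑ k : Fin 7, eps i j k * v k

/-- The vector `⟨A⟩` with `⟨A⟩_i = Σ_{j,k} ε_{ijk} A_{jk}`. -/
def angle (A : Matrix (Fin 7) (Fin 7) ℝ) : Fin 7 → ℝ :=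
  fun i => ∑ j : Fin 7, ∑ k : Fin 7, eps i j k * A j k

/-- Wedge product of two 2-forms (determinant convention), evaluated on four vectors. -/
def wedge22 (A B : (Fin 7 → ℝ) → (Fin 7 → ℝ) → ℝ) (v : Fin 4 → (Fin 7 → ℝ)) : ℝ :=
  (1 / 4 : ℝ) * ∑ σ : Equiv.Perm (Fin 4),
    ((Equiv.Perm.sign σ : ℤ) : ℝ) * (A (v (σ 0)) (v (σ 1)) * B (v (σ 2)) (v (σ 3)))

/-- Wedge product of three 2-forms (determinant convention), evaluated on six vectors. -/
def wedge222 (A B C : (Fin 7 → ℝ) → (Fin 7 → ℝ) → ℝ) (v : Fin 6 → (Fin 7 → ℝ)) : ℝ :=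
  (1 / 8 : ℝ) * ∑ σ : Equiv.Perm (Fin 6),
    ((Equiv.Perm.sign σ : ℤ) : ℝ) *
      (A (v (σ 0)) (v (σ 1)) * B (v (σ 2)) (v (σ 3)) * C (v (σ 4)) (v (σ 5)))

/-- Wedge product of two 2-forms and a 3-form (determinant convention),
evaluated on seven vectors. -/
def wedge223 (A B : (Fin 7 → ℝ) → (Fin 7 → ℝ) → ℝ)
    (C : (Fin 7 → ℝ) → (Fin 7 → ℝ) → (Fin 7 → ℝ) → ℝ)
    (v : Fin 7 → (Fin 7 → ℝ)) : ℝ :=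
  (1 / 24 : ℝ) * ∑ σ : Equiv.Perm (Fin 7),
    ((Equiv.Perm.sign σ : ℤ) : ℝ) *
      (A (v (σ 0)) (v (σ 1)) * B (v (σ 2)) (v (σ 3)) * C (v (σ 4)) (v (σ 5)) (v (σ 6)))

/-- The map `i_φ : S²(ℝ⁷)* → Λ³(ℝ⁷)*`,
`i_φ(h) = Σ_{i,j,k,l} ε_{ikl} h_{ij} e^j ∧ e^k ∧ e^l`, evaluated on `(x, y, z)`. -/
def iphi (h : Fin 7 → Fin 7 → ℝ) (x y z : Fin 7 → ℝ) : ℝ :=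
  ∑ i : Fin 7, ∑ j : Fin 7, ∑ k : Fin 7, ∑ l : Fin 7, eps i k l * h i j * w3 j k l x y z

/-!
Let `B` be the skew matrix of components of `β`. Expanding the square, `|β ∧ β|²` is a combination
of `(tr B²)²` and `tr B⁴`, and since `∑ ψ_{ijkl} B_{kl} = -2 B_{ij}` the cross term with `ψ` is a
multiple of `|β|² = -tr B² / 2`. The remaining input is `4 tr B⁴ = (tr B²)²`: `B` lies in `𝔤₂`, so
it acts on `φ` as a derivation, and the fourth power of this derivation property, contracted with
`φ`, relates the two traces.
-/

section Components

lemma e_eq_single (i : Fin 7) : e i = Pi.single i 1 := by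
  ext j
  simp [e, Pi.single_apply]

lemma dotProduct_e (x : Fin 7 → ℝ) (i : Fin 7) : x ⬝ᵥ e i = x i := by
  rw [e_eq_single, dotProduct_single_one]

lemma mulVec_e (A : Matrix (Fin 7) (Fin 7) ℝ) (i j : Fin 7) : (A *ᵥ e i) j = A j i := by
  rw [e_eq_single, Matrix.mulVec_single_one, Matrix.col_apply]

lemma phi_cyclic (x y z : Fin 7 → ℝ) : phi x y z = phi y z x := by
  simp only [phi, w3]
  ring

lemma phi_eq_sum (x y z : Fin 7 → ℝ) : phi x y z = ∑ m, x m * phi (e m) y z := by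
  simp only [phi, w3, Fin.sum_univ_seven, e, Fin.reduceEq, one_ne_zero, zero_ne_one, ↓reduceIte]
  ring

lemma w4_laplace (a b c d : Fin 7) (x y z w : Fin 7 → ℝ) : w4 a b c d x y z w =
    (x a * y b - x b * y a) * (z c * w d - z d * w c)
    - (x a * y c - x c * y a) * (z b * w d - z d * w b)
    + (x a * y d - x d * y a) * (z b * w c - z c * w b)
    + (x b * y c - x c * y b) * (z a * w d - z d * w a)
    - (x b * y d - x d * y b) * (z a * w c - z c * w a)
    + (x c * y d - x d * y c) * (z a * w b - z b * w a) := by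
  rw [w4, Matrix.det_succ_row_zero]
  simp only [Fin.sum_univ_four, Matrix.det_fin_three, Matrix.submatrix_apply, Matrix.of_apply,
    Fin.succAbove, Fin.reduceSucc, Fin.reduceCastSucc, Fin.reduceLT, ↓reduceIte, Matrix.cons_val,
    Fin.coe_ofNat_eq_mod]
  ring

lemma psi_swap (x y z w : Fin 7 → ℝ) : psi z y x w = -psi x y z w := by
  simp only [psi, w4_laplace]
  ring

lemma psi_eq_sum (x y z w : Fin 7 → ℝ) : psi x y z w = ∑ m, z m * psi x y (e m) w := by
  simp only [psi, w4_laplace, Fin.sum_univ_seven, e, Fin.reduceEq, one_ne_zero, zero_ne_one,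
    ↓reduceIte]
  ring

theorem sum_phi_mul_phi (x y z w : Fin 7 → ℝ) :
    ∑ k, phi x y (e k) * phi (e k) z w =
      (x ⬝ᵥ z) * (y ⬝ᵥ w) - (x ⬝ᵥ w) * (y ⬝ᵥ z) + psi x y z w := by
  simp only [phi, w3, psi, w4_laplace, dotProduct, Fin.sum_univ_seven, e, Fin.reduceEq,
    one_ne_zero, zero_ne_one, ↓reduceIte]
  ring

theorem sum_psi_mul_phi (x y z u v : Fin 7 → ℝ) :
    ∑ l, psi x y z (e l) * phi (e l) u v =
      ((x ⬝ᵥ v) * phi u y z - (x ⬝ᵥ u) * phi v y z)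
        + ((y ⬝ᵥ v) * phi x u z - (y ⬝ᵥ u) * phi x v z)
        + ((z ⬝ᵥ v) * phi x y u - (z ⬝ᵥ u) * phi x y v) := by
  simp only [phi, w3, psi, w4_laplace, dotProduct, Fin.sum_univ_seven, e, Fin.reduceEq,
    one_ne_zero, zero_ne_one, ↓reduceIte]
  ring

end Components

lemma sum_fin_succ_arrow {ι M : Type*} [Fintype ι] [AddCommMonoid M] {k : ℕ}
    (F : (Fin (k + 1) → ι) → M) :
    ∑ v, F v = ∑ a, ∑ v : Fin k → ι, F (Matrix.vecCons a v) := by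
  rw [← Fintype.sum_prod_type', ← (Fin.consEquiv fun _ => ι).sum_comp]
  rfl

lemma sum_fin_two_arrow {ι M : Type*} [Fintype ι] [AddCommMonoid M] (F : (Fin 2 → ι) → M) :
    ∑ v, F v = ∑ a, ∑ b, F ![a, b] := by
  simp only [sum_fin_succ_arrow, Fintype.sum_unique, Subsingleton.elim default ![]]

lemma sum_fin_four_arrow {ι M : Type*} [Fintype ι] [AddCommMonoid M] (F : (Fin 4 → ι) → M) :
    ∑ v, F v = ∑ a, ∑ b, ∑ c, ∑ d, F ![a, b, c, d] := by
  simp only [sum_fin_succ_arrow, Fintype.sum_unique, Subsingleton.elim default ![]]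

lemma strictMono_vec_two {ι : Type*} [Preorder ι] {a b : ι} : StrictMono ![a, b] ↔ a < b := by
  simp [Fin.strictMono_iff_lt_succ]

lemma strictMono_vec_four {ι : Type*} [Preorder ι] {a b c d : ι} :
    StrictMono ![a, b, c, d] ↔ a < b ∧ b < c ∧ c < d := by
  simp [Fin.strictMono_iff_lt_succ, Fin.forall_fin_succ]

section IncreasingSums

variable {ι : Type*} [LinearOrder ι] {k : ℕ}

lemma strictMono_comp_perm_unique {v : Fin k → ι} {σ τ : Equiv.Perm (Fin k)}
    (hσ : StrictMono (v ∘ σ)) (hτ : StrictMono (v ∘ τ)) : σ = τ := by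
  have hv : Function.Injective v := (σ.injective_comp v).1 hσ.injective
  exact Equiv.ext fun i => hv (congrFun (Tuple.unique_monotone hσ.monotone hτ.monotone) i)

lemma existsUnique_strictMono_comp_perm {v : Fin k → ι} (hv : Function.Injective v) :
    ∃! σ : Equiv.Perm (Fin k), StrictMono (v ∘ σ) :=
  ⟨Tuple.sort v,
    (Tuple.monotone_sort v).strictMono_of_injective (hv.comp (Tuple.sort v).injective),
    fun _ hτ => strictMono_comp_perm_unique hτ
      ((Tuple.monotone_sort v).strictMono_of_injective (hv.comp (Tuple.sort v).injective))⟩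

open Classical in
theorem sum_eq_factorial_smul_sum_strictMono [Fintype ι] {M : Type*} [AddCommMonoid M]
    {F : (Fin k → ι) → M} (hperm : ∀ (σ : Equiv.Perm (Fin k)) v, F (v ∘ σ) = F v)
    (hinj : ∀ v, ¬ Function.Injective v → F v = 0) :
    ∑ v, F v = k.factorial • ∑ v : Fin k → ι, if StrictMono v then F v else 0 := by
  have hsort (v : Fin k → ι) :
      F v = ∑ σ : Equiv.Perm (Fin k), if StrictMono (v ∘ σ) then F (v ∘ σ) else 0 := by
    by_cases hv : Function.Injective v
    · obtain ⟨τ, hτ, hunique⟩ := existsUnique_strictMono_comp_perm hv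
      rw [Finset.sum_eq_single_of_mem τ (Finset.mem_univ τ)
        fun σ _ hσ => if_neg fun h => hσ (hunique σ h), if_pos hτ, hperm]
    · simp only [hperm, hinj v hv, ite_self, Finset.sum_const_zero]
  calc ∑ v, F v
      = ∑ σ : Equiv.Perm (Fin k), ∑ v : Fin k → ι,
          if StrictMono (v ∘ σ) then F (v ∘ σ) else 0 := by
        rw [Finset.sum_comm]
        exact Finset.sum_congr rfl fun v _ => hsort v
    _ = ∑ _σ : Equiv.Perm (Fin k), ∑ v : Fin k → ι, if StrictMono v then F v else 0 :=
        Finset.sum_congr rfl fun σ _ => (σ.arrowCongr (Equiv.refl ι)).symm.sum_comp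
          fun v => if StrictMono v then F v else 0
    _ = k.factorial • ∑ v : Fin k → ι, if StrictMono v then F v else 0 := by
        rw [Finset.sum_const, Finset.card_univ, Fintype.card_perm, Fintype.card_fin]

end IncreasingSums

section AlternatingTensors

variable {X Y : Type*} {k : ℕ}

/-- A real-valued function of `k` arguments that is multiplied by the sign under a permutation of
its arguments: a `k`-form as a function of vectors, or its components as a function of indices. -/
def SignEquivariant (f : (Fin k → X) → ℝ) : Prop :=
  ∀ (σ : Equiv.Perm (Fin k)) (v : Fin k → X), f (v ∘ σ) = (Equiv.Perm.sign σ : ℤ) * f v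

namespace SignEquivariant

variable {f g : (Fin k → X) → ℝ}

lemma add (hf : SignEquivariant f) (hg : SignEquivariant g) :
    SignEquivariant fun v => f v + g v := fun σ v => by
  simp only [hf σ v, hg σ v]
  ring

lemma const_mul (c : ℝ) (hf : SignEquivariant f) : SignEquivariant fun v => c * f v :=
  fun σ v => by
    simp only [hf σ v]
    ring

lemma comp_left (hf : SignEquivariant f) (u : Y → X) : SignEquivariant fun v => f (u ∘ v) :=
  fun σ v => hf σ (u ∘ v)

lemma eq_zero_of_not_injective (hf : SignEquivariant f) {v : Fin k → X}
    (hv : ¬ Function.Injective v) : f v = 0 := by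
  obtain ⟨i, j, hij, hne⟩ : ∃ i j, v i = v j ∧ i ≠ j := by
    simpa [Function.Injective] using hv
  have hswap := hf (Equiv.swap i j) v
  have hcomp : v ∘ Equiv.swap i j = v := by
    rw [Equiv.comp_swap_eq_update, hij, Function.update_eq_self, ← hij, Function.update_eq_self]
  rw [hcomp, Equiv.Perm.sign_swap hne] at hswap
  push_cast at hswap
  linarith

open Classical in
theorem sum_sq {ι : Type*} [Fintype ι] [LinearOrder ι] {f : (Fin k → ι) → ℝ}
    (hf : SignEquivariant f) :
    ∑ v, f v ^ 2 = k.factorial * ∑ v, if StrictMono v then f v ^ 2 else 0 := by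
  rw [← nsmul_eq_mul]
  refine sum_eq_factorial_smul_sum_strictMono (fun σ v => ?_) fun v hv => ?_
  · rcases Int.units_eq_one_or (Equiv.Perm.sign σ) with h | h <;> simp [hf σ v, h]
  · rw [hf.eq_zero_of_not_injective hv, zero_pow two_ne_zero]

theorem sum_sign_mul [Fintype X] (hf : SignEquivariant f) (p : (Fin k → X) → ℝ) :
    ∑ v, (∑ σ : Equiv.Perm (Fin k), (Equiv.Perm.sign σ : ℤ) * p (v ∘ σ)) * f v =
      k.factorial * ∑ v, p v * f v := by
  have hterm (σ : Equiv.Perm (Fin k)) :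
      ∑ v, (Equiv.Perm.sign σ : ℤ) * p (v ∘ σ) * f v = ∑ v, p v * f v := by
    rw [← (σ.arrowCongr (Equiv.refl X)).symm.sum_comp fun v => p v * f v]
    refine Finset.sum_congr rfl fun v _ => ?_
    change _ = p (v ∘ σ) * f (v ∘ σ)
    rw [hf σ v]
    ring
  simp only [Finset.sum_mul]
  rw [Finset.sum_comm, Finset.sum_congr rfl fun σ _ => hterm σ, Finset.sum_const,
    Finset.card_univ, Fintype.card_perm, Fintype.card_fin, nsmul_eq_mul]

theorem sum_sq_fin_two {ι : Type*} [Fintype ι] [LinearOrder ι] {f : (Fin 2 → ι) → ℝ}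
    (hf : SignEquivariant f) :
    ∑ v, f v ^ 2 = 2 * ∑ a, ∑ b, if a < b then f ![a, b] ^ 2 else 0 := by
  simp only [hf.sum_sq, sum_fin_two_arrow, strictMono_vec_two]
  norm_num [Nat.factorial]

theorem sum_sq_fin_four {ι : Type*} [Fintype ι] [LinearOrder ι] {f : (Fin 4 → ι) → ℝ}
    (hf : SignEquivariant f) :
    ∑ v, f v ^ 2 = 24 * ∑ a, ∑ b, ∑ c, ∑ d,
      if a < b ∧ b < c ∧ c < d then f ![a, b, c, d] ^ 2 else 0 := by
  simp only [hf.sum_sq, sum_fin_four_arrow, strictMono_vec_four]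
  norm_num [Nat.factorial]

end SignEquivariant

lemma signEquivariant_sum_sign_mul (p : (Fin k → X) → ℝ) :
    SignEquivariant fun v => ∑ σ : Equiv.Perm (Fin k), (Equiv.Perm.sign σ : ℤ) * p (v ∘ σ) := by
  intro τ v
  change ∑ σ : Equiv.Perm (Fin k), _ = _
  rw [← Equiv.sum_comp (Equiv.mulLeft τ⁻¹), Finset.mul_sum]
  refine Finset.sum_congr rfl fun σ _ => ?_
  have hcomp : (v ∘ τ) ∘ (τ⁻¹ * σ : Equiv.Perm (Fin k)) = v ∘ σ := by
    ext i
    simp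
  rw [Equiv.coe_mulLeft, hcomp, Equiv.Perm.sign_mul, Equiv.Perm.sign_inv]
  push_cast
  ring

lemma signEquivariant_alternatingMap {M : Type*} [AddCommGroup M] [Module ℝ M]
    (ω : M [⋀^Fin k]→ₗ[ℝ] ℝ) : SignEquivariant ω := fun σ v => by
  rw [ω.map_perm, Units.smul_def, zsmul_eq_mul]

lemma alternatingMap_swap {M : Type*} [AddCommGroup M] [Module ℝ M]
    (ω : M [⋀^Fin 2]→ₗ[ℝ] ℝ) (x y : M) : ω ![y, x] = -ω ![x, y] := by
  rw [← ω.map_swap ![x, y] (i := 0) (j := 1) (by decide)]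
  congr 1
  ext i
  fin_cases i <;> rfl

end AlternatingTensors

section Wedge

lemma wedge22_eq_sum_sign (A B : (Fin 7 → ℝ) → (Fin 7 → ℝ) → ℝ) (v : Fin 4 → Fin 7 → ℝ) :
    wedge22 A B v = (1 / 4 : ℝ) * ∑ σ : Equiv.Perm (Fin 4), (Equiv.Perm.sign σ : ℤ) *
      (fun u : Fin 4 → Fin 7 → ℝ => A (u 0) (u 1) * B (u 2) (u 3)) (v ∘ σ) :=
  rfl

lemma signEquivariant_wedge22 (A B : (Fin 7 → ℝ) → (Fin 7 → ℝ) → ℝ) :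
    SignEquivariant (wedge22 A B) :=
  (signEquivariant_sum_sign_mul
    fun u : Fin 4 → Fin 7 → ℝ => A (u 0) (u 1) * B (u 2) (u 3)).const_mul (1 / 4)

theorem sum_wedge22_mul {ι : Type*} [Fintype ι] (A B : (Fin 7 → ℝ) → (Fin 7 → ℝ) → ℝ)
    (u : ι → Fin 7 → ℝ) {f : (Fin 4 → ι) → ℝ} (hf : SignEquivariant f) :
    ∑ v, wedge22 A B (u ∘ v) * f v =
      6 * ∑ v, A (u (v 0)) (u (v 1)) * B (u (v 2)) (u (v 3)) * f v := by
  have hsum := hf.sum_sign_mul fun v => A (u (v 0)) (u (v 1)) * B (u (v 2)) (u (v 3))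
  calc ∑ v, wedge22 A B (u ∘ v) * f v
      = 1 / 4 * ∑ v, (∑ σ : Equiv.Perm (Fin 4), (Equiv.Perm.sign σ : ℤ) *
          (fun v => A (u (v 0)) (u (v 1)) * B (u (v 2)) (u (v 3))) (v ∘ σ)) * f v := by
        rw [Finset.mul_sum]
        exact Finset.sum_congr rfl fun v _ => mul_assoc _ _ _
    _ = 6 * ∑ v, A (u (v 0)) (u (v 1)) * B (u (v 2)) (u (v 3)) * f v := by
        rw [hsum, ← mul_assoc]
        norm_num [Nat.factorial]

lemma sum_perm_fin_succ {n : ℕ} {M : Type*} [AddCommMonoid M]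
    (f : Equiv.Perm (Fin (n + 1)) → M) :
    ∑ σ, f σ = ∑ p : Fin (n + 1), ∑ τ : Equiv.Perm (Fin n),
      f (Equiv.Perm.decomposeFin.symm (p, τ)) := by
  rw [← Equiv.sum_comp Equiv.Perm.decomposeFin.symm f, Fintype.sum_prod_type]

theorem wedge22_self {A : (Fin 7 → ℝ) → (Fin 7 → ℝ) → ℝ} (hA : ∀ x y, A y x = -A x y)
    (v : Fin 4 → Fin 7 → ℝ) :
    wedge22 A A v = 2 * (A (v 0) (v 1) * A (v 2) (v 3) - A (v 0) (v 2) * A (v 1) (v 3)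
      + A (v 0) (v 3) * A (v 1) (v 2)) := by
  have h1 : (1 : Fin 4) = Fin.succ 0 := rfl
  have h2 : (2 : Fin 4) = Fin.succ (Fin.succ 0) := rfl
  have h3 : (3 : Fin 4) = Fin.succ (Fin.succ (Fin.succ 0)) := rfl
  rw [wedge22, h1, h2, h3]
  simp only [sum_perm_fin_succ, Fin.sum_univ_succ, Equiv.Perm.decomposeFin_symm_apply_succ,
    Equiv.Perm.decomposeFin_symm_apply_zero, Equiv.Perm.decomposeFin.symm_sign]
  simp only [Equiv.swap_apply_def, ↓reduceIte, one_mul, neg_mul, Fin.reduceSucc, Fin.reduceEq,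
    Finset.univ_unique, Finset.sum_singleton, Equiv.Perm.default_eq, Equiv.Perm.sign_one,
    Units.val_one, Units.val_neg]
  rw [hA (v 0) (v 1), hA (v 0) (v 2), hA (v 0) (v 3), hA (v 1) (v 2), hA (v 1) (v 3),
    hA (v 2) (v 3)]
  ring

lemma w4_eq_sum_sign (a b c d : Fin 7) (v : Fin 4 → Fin 7 → ℝ) :
    w4 a b c d (v 0) (v 1) (v 2) (v 3) = ∑ σ : Equiv.Perm (Fin 4), (Equiv.Perm.sign σ : ℤ) *
      (fun u : Fin 4 → Fin 7 → ℝ => ∏ i, u i (![a, b, c, d] i)) (v ∘ σ) := by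
  have hdet : w4 a b c d (v 0) (v 1) (v 2) (v 3) =
      Matrix.det (Matrix.of fun i j => v i (![a, b, c, d] j)) := by
    unfold w4
    congr 1
    ext i j
    fin_cases i <;> fin_cases j <;> rfl
  rw [hdet, Matrix.det_apply']
  rfl

lemma signEquivariant_w4 (a b c d : Fin 7) :
    SignEquivariant fun v : Fin 4 → Fin 7 → ℝ => w4 a b c d (v 0) (v 1) (v 2) (v 3) := by
  intro σ v
  simpa only [w4_eq_sum_sign] using signEquivariant_sum_sign_mul
    (fun u : Fin 4 → Fin 7 → ℝ => ∏ i, u i (![a, b, c, d] i)) σ v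

lemma signEquivariant_psi :
    SignEquivariant fun v : Fin 4 → Fin 7 → ℝ => psi (v 0) (v 1) (v 2) (v 3) := by
  intro σ v
  have hw4 (a b c d : Fin 7) := signEquivariant_w4 a b c d σ v
  simp only [psi, hw4]
  ring

lemma signEquivariant_eps4 :
    SignEquivariant fun v : Fin 4 → Fin 7 => eps4 (v 0) (v 1) (v 2) (v 3) :=
  signEquivariant_psi.comp_left e

theorem sum_w4_mul (a b c d : Fin 7) {f : (Fin 4 → Fin 7) → ℝ} (hf : SignEquivariant f) :
    ∑ v, w4 a b c d (e (v 0)) (e (v 1)) (e (v 2)) (e (v 3)) * f v = 24 * f ![a, b, c, d] := by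
  have hprod (v : Fin 4 → Fin 7) :
      ∏ i, e (v i) (![a, b, c, d] i) = if ![a, b, c, d] = v then 1 else 0 := by
    simp only [e, Fintype.prod_ite_zero, Finset.prod_const_one, funext_iff]
  have hsum := hf.sum_sign_mul fun v => ∏ i, e (v i) (![a, b, c, d] i)
  calc ∑ v, w4 a b c d (e (v 0)) (e (v 1)) (e (v 2)) (e (v 3)) * f v
      = ∑ v, (∑ σ : Equiv.Perm (Fin 4), (Equiv.Perm.sign σ : ℤ) *
          (fun v => ∏ i, e (v i) (![a, b, c, d] i)) (v ∘ σ)) * f v :=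
        Finset.sum_congr rfl fun v _ => congrArg (· * f v) (w4_eq_sum_sign a b c d (e ∘ v))
    _ = Nat.factorial 4 * ∑ v, (∏ i, e (v i) (![a, b, c, d] i)) * f v := hsum
    _ = 24 * f ![a, b, c, d] := by
        simp only [hprod, ite_mul, one_mul, zero_mul, Finset.sum_ite_eq, Finset.mem_univ, if_true]
        norm_num [Nat.factorial]

theorem sum_eps4_sq : ∑ v : Fin 4 → Fin 7, eps4 (v 0) (v 1) (v 2) (v 3) ^ 2 = 168 := by
  have hpair (a b c d : Fin 7) := sum_w4_mul a b c d signEquivariant_eps4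
  calc ∑ v : Fin 4 → Fin 7, eps4 (v 0) (v 1) (v 2) (v 3) ^ 2
      = 24 * (eps4 3 4 5 6 + eps4 1 2 5 6 + eps4 1 2 3 4 + eps4 0 2 4 6
          - eps4 0 2 3 5 - eps4 0 1 4 5 - eps4 0 1 3 6) := by
        simp only [sq]
        conv_lhs =>
          enter [2, v, 1]
          rw [eps4, psi]
        simp only [add_mul, sub_mul, Finset.sum_add_distrib, Finset.sum_sub_distrib, hpair]
        simp only [Matrix.cons_val]
        ring
    _ = 168 := by
        simp only [eps4, psi, w4_laplace, e, Fin.reduceEq, one_ne_zero, zero_ne_one, ↓reduceIte]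
        norm_num

end Wedge

section Derivation

lemma sum_mul_sub_of_skew {ι : Type*} [Fintype ι] {B : Matrix ι ι ℝ} (hB : Bᵀ = -B)
    (x g : ι → ℝ) :
    ∑ m, ∑ n, B m n * (x n * g m - x m * g n) = 2 * ∑ m, (B *ᵥ x) m * g m := by
  have hskew (m n : ι) : B n m = -B m n := congrFun (congrFun hB m) n
  have hswap : ∑ m, ∑ n, B m n * (x m * g n) = -∑ m, (B *ᵥ x) m * g m := by
    rw [Finset.sum_comm]
    simp only [Matrix.mulVec, dotProduct, Finset.sum_mul, ← Finset.sum_neg_distrib]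
    refine Finset.sum_congr rfl fun m _ => Finset.sum_congr rfl fun n _ => ?_
    rw [hskew m n]
    ring
  have hdirect : ∑ m, ∑ n, B m n * (x n * g m) = ∑ m, (B *ᵥ x) m * g m := by
    simp only [Matrix.mulVec, dotProduct, Finset.sum_mul, mul_assoc]
  simp only [mul_sub, Finset.sum_sub_distrib, hswap, hdirect]
  ring

variable {B : Matrix (Fin 7) (Fin 7) ℝ}

lemma sum_mul_sum_phi_of_angle_eq_zero (hangle : angle B = 0) (p : Fin 7 → ℝ) :
    ∑ m, ∑ n, B m n * ∑ l, p l * phi (e l) (e m) (e n) = 0 := by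
  calc _ = ∑ l, p l * angle B l := by
        simp only [angle, eps, Finset.mul_sum]
        rw [Finset.sum_congr rfl fun m _ => Finset.sum_comm, Finset.sum_comm]
        simp only [mul_comm (B _ _), mul_assoc]
    _ = 0 := by simp only [hangle, Pi.zero_apply, mul_zero, Finset.sum_const_zero]

theorem phi_derivation_of_angle_eq_zero (hB : Bᵀ = -B) (hangle : angle B = 0)
    (x y z : Fin 7 → ℝ) :
    phi (B *ᵥ x) y z + phi x (B *ᵥ y) z + phi x y (B *ᵥ z) = 0 := by
  have hcontract := sum_mul_sum_phi_of_angle_eq_zero hangle fun l => psi x y z (e l)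
  have hsecond : ∑ m, (B *ᵥ y) m * phi x (e m) z = phi x (B *ᵥ y) z := by
    simp only [phi_cyclic x, phi_eq_sum (B *ᵥ y)]
  have hthird : ∑ m, (B *ᵥ z) m * phi x y (e m) = phi x y (B *ᵥ z) := by
    simp only [← phi_cyclic _ x y, phi_eq_sum (B *ᵥ z)]
  simp only [sum_psi_mul_phi, dotProduct_e, mul_add, Finset.sum_add_distrib,
    sum_mul_sub_of_skew hB, ← phi_eq_sum, hsecond, hthird] at hcontract
  linarith

theorem sum_mul_psi_of_angle_eq_zero (hB : Bᵀ = -B) (hangle : angle B = 0) (x y : Fin 7 → ℝ) :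
    ∑ k, ∑ l, B k l * psi x y (e k) (e l) = -2 * ((B *ᵥ y) ⬝ᵥ x) := by
  have hcontract := sum_mul_sum_phi_of_angle_eq_zero hangle fun m => phi x y (e m)
  have hdot := sum_mul_sub_of_skew hB y x
  simp only [sum_phi_mul_phi, dotProduct_e, mul_add, Finset.sum_add_distrib] at hcontract
  simp only [mul_comm (y _)] at hdot
  rw [dotProduct]
  linarith

end Derivation

section TracePowers

/- If `T` is a derivation of `f`, its actions `a, b, c` on the three slots of `f` commute and
satisfy `a + b + c = 0`, whence `a⁴ + b⁴ + c⁴ = 2 (a²b² + a²c² + b²c²)`; the cofactor of `a + b + c`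
is `a³ + b³ + c³ - a²b - ab² - a²c - ac² - b²c - bc² + 2abc`. -/
lemma derivation_pow_four {V : Type*} {f : V → V → V → ℝ} {T : V → V}
    (hT : ∀ x y z, f (T x) y z + f x (T y) z + f x y (T z) = 0) (x y z : V) :
    f (T (T (T (T x)))) y z + f x (T (T (T (T y)))) z + f x y (T (T (T (T z)))) =
      2 * (f (T (T x)) (T (T y)) z + f (T (T x)) y (T (T z)) + f x (T (T y)) (T (T z))) := by
  linear_combination hT (T (T (T x))) y z + hT x (T (T (T y))) z + hT x y (T (T (T z)))
    - hT (T (T x)) (T y) z - hT (T x) (T (T y)) z - hT (T (T x)) y (T z)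
    - hT (T x) y (T (T z)) - hT x (T (T y)) (T z) - hT x (T y) (T (T z))
    + 2 * hT (T x) (T y) (T z)

/-- The full contraction of `φ` with its pullback along `A`, `A'`, `A''` in the three slots. -/
def phiTrace (A A' A'' : Matrix (Fin 7) (Fin 7) ℝ) : ℝ :=
  ∑ i, ∑ j, ∑ k, eps i j k * phi (A *ᵥ e i) (A' *ᵥ e j) (A'' *ᵥ e k)

lemma phiTrace_cyclic (A A' A'' : Matrix (Fin 7) (Fin 7) ℝ) :
    phiTrace A A' A'' = phiTrace A' A'' A := by
  unfold phiTrace eps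
  rw [Finset.sum_comm]
  refine Finset.sum_congr rfl fun j _ => ?_
  rw [Finset.sum_comm]
  refine Finset.sum_congr rfl fun k _ => Finset.sum_congr rfl fun i _ => ?_
  rw [phi_cyclic (e i), phi_cyclic (A *ᵥ e i)]

lemma sum_psi_mulVec_of_isSymm {A : Matrix (Fin 7) (Fin 7) ℝ} (hA : A.IsSymm)
    (y w : Fin 7 → ℝ) : ∑ i, psi (e i) y (A *ᵥ e i) w = 0 := by
  have hexpand : ∑ i, psi (e i) y (A *ᵥ e i) w = ∑ i, ∑ m, A m i * psi (e i) y (e m) w := by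
    refine Finset.sum_congr rfl fun i _ => ?_
    simp only [psi_eq_sum (e i) y (A *ᵥ e i) w, mulVec_e]
  have hneg : ∑ i, ∑ m, A m i * psi (e i) y (e m) w =
      -∑ i, ∑ m, A m i * psi (e i) y (e m) w := by
    conv_lhs => rw [Finset.sum_comm]
    simp only [← Finset.sum_neg_distrib]
    refine Finset.sum_congr rfl fun m _ => Finset.sum_congr rfl fun i _ => ?_
    rw [psi_swap (e m) y (e i) w, hA.apply, mul_neg]
  linarith

theorem phiTrace_one_right {A : Matrix (Fin 7) (Fin 7) ℝ} (hA : A.IsSymm)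
    (A' : Matrix (Fin 7) (Fin 7) ℝ) :
    phiTrace A A' 1 = A.trace * A'.trace - (A' * A).trace := by
  have hpsi : ∑ i, ∑ j, psi (e i) (e j) (A *ᵥ e i) (A' *ᵥ e j) = 0 := by
    rw [Finset.sum_comm]
    simp only [sum_psi_mulVec_of_isSymm hA, Finset.sum_const_zero]
  have hphi (i j : Fin 7) :
      ∑ k, eps i j k * phi (A *ᵥ e i) (A' *ᵥ e j) ((1 : Matrix _ _ ℝ) *ᵥ e k) =
        A i i * A' j j - A' i j * A j i + psi (e i) (e j) (A *ᵥ e i) (A' *ᵥ e j) := by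
    simp only [eps, Matrix.one_mulVec, ← phi_cyclic (e _) (A *ᵥ e i), sum_phi_mul_phi,
      dotProduct_comm (e _), dotProduct_e, mulVec_e]
  simp only [phiTrace, hphi, Finset.sum_add_distrib, Finset.sum_sub_distrib, hpsi, Matrix.trace,
    Matrix.diag_apply, Matrix.mul_apply, Finset.sum_mul_sum, add_zero]

theorem four_mul_trace_pow_four {B : Matrix (Fin 7) (Fin 7) ℝ} (hB : Bᵀ = -B)
    (hangle : angle B = 0) : 4 * (B ^ 4).trace = (B ^ 2).trace ^ 2 := by
  have hsymm (k : ℕ) (hk : Even k) : (B ^ k).IsSymm := by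
    rw [Matrix.IsSymm, Matrix.transpose_pow, hB, hk.neg_pow]
  have hcontract : phiTrace (B ^ 4) 1 1 + phiTrace 1 (B ^ 4) 1 + phiTrace 1 1 (B ^ 4) =
      2 * (phiTrace (B ^ 2) (B ^ 2) 1 + phiTrace (B ^ 2) 1 (B ^ 2)
        + phiTrace 1 (B ^ 2) (B ^ 2)) := by
    simp only [phiTrace, Finset.mul_sum, ← Finset.sum_add_distrib]
    refine Finset.sum_congr rfl fun i _ => Finset.sum_congr rfl fun j _ =>
      Finset.sum_congr rfl fun k _ => ?_
    have hfour := derivation_pow_four (phi_derivation_of_angle_eq_zero hB hangle) (e i) (e j) (e k)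
    simp only [Matrix.mulVec_mulVec, ← pow_two, ← pow_succ'] at hfour
    simp only [Matrix.one_mulVec]
    linear_combination eps i j k * hfour
  have hfour : phiTrace 1 1 (B ^ 4) = 6 * (B ^ 4).trace := by
    rw [← phiTrace_cyclic, phiTrace_one_right (hsymm 4 (by decide)), one_mul,
      Matrix.trace_one, Fintype.card_fin]
    push_cast
    ring
  have htwo : phiTrace (B ^ 2) (B ^ 2) 1 = (B ^ 2).trace ^ 2 - (B ^ 4).trace := by
    rw [phiTrace_one_right (hsymm 2 even_two), ← pow_add, ← pow_two]
  rw [phiTrace_cyclic (B ^ 4), ← phiTrace_cyclic 1 1, phiTrace_cyclic 1 (B ^ 2),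
    ← phiTrace_cyclic (B ^ 2) (B ^ 2), hfour, htwo] at hcontract
  linarith

end TracePowers

section SkewMatrices

variable {ι : Type*} [Fintype ι] [DecidableEq ι] {B : Matrix ι ι ℝ}

lemma sum_sq_eq_neg_trace_sq (hB : Bᵀ = -B) : ∑ a, ∑ b, B a b ^ 2 = -(B ^ 2).trace := by
  have hskew (a b : ι) : B b a = -B a b := congrFun (congrFun hB a) b
  simp only [pow_two, Matrix.trace, Matrix.diag_apply, Matrix.mul_apply,
    ← Finset.sum_neg_distrib]
  refine Finset.sum_congr rfl fun a _ => Finset.sum_congr rfl fun b _ => ?_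
  rw [hskew a b]
  ring

lemma trace_pow_four (B : Matrix ι ι ℝ) :
    (B ^ 4).trace = ∑ a, ∑ b, ∑ c, ∑ d, B a b * (B b c * (B c d * B d a)) := by
  have hpow : B ^ 4 = B * (B * (B * B)) := by noncomm_ring
  simp only [hpow, Matrix.trace, Matrix.diag_apply, Matrix.mul_apply, Finset.mul_sum]

theorem sum_mul_pfaffian (hB : Bᵀ = -B) :
    ∑ a, ∑ b, ∑ c, ∑ d,
        B a b * B c d * (B a b * B c d - B a c * B b d + B a d * B b c) =
      (B ^ 2).trace ^ 2 - 2 * (B ^ 4).trace := by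
  have hskew (a b : ι) : B b a = -B a b := congrFun (congrFun hB a) b
  have hfirst : ∑ a, ∑ b, ∑ c, ∑ d, B a b * B c d * (B a b * B c d) = (B ^ 2).trace ^ 2 := by
    rw [← neg_sq, ← sum_sq_eq_neg_trace_sq hB, pow_two]
    simp only [Finset.sum_mul, Finset.mul_sum]
    refine Finset.sum_congr rfl fun a _ => Finset.sum_congr rfl fun b _ =>
      Finset.sum_congr rfl fun c _ => Finset.sum_congr rfl fun d _ => ?_
    ring
  have hsecond : ∑ a, ∑ b, ∑ c, ∑ d, B a b * B c d * (B a c * B b d) = (B ^ 4).trace := by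
    rw [trace_pow_four, Finset.sum_comm]
    refine Finset.sum_congr rfl fun b _ => Finset.sum_congr rfl fun a _ =>
      Finset.sum_congr rfl fun c _ => Finset.sum_congr rfl fun d _ => ?_
    rw [hskew b a, hskew d b]
    ring
  have hthird : ∑ a, ∑ b, ∑ c, ∑ d, B a b * B c d * (B a d * B b c) = -(B ^ 4).trace := by
    simp only [trace_pow_four, ← Finset.sum_neg_distrib]
    refine Finset.sum_congr rfl fun a _ => Finset.sum_congr rfl fun b _ =>
      Finset.sum_congr rfl fun c _ => Finset.sum_congr rfl fun d _ => ?_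
    rw [hskew d a]
    ring
  simp only [mul_add, mul_sub, Finset.sum_add_distrib, Finset.sum_sub_distrib, hfirst, hsecond,
    hthird]
  ring

end SkewMatrices

section TwoForms

variable (β : AlternatingMap ℝ (Fin 7 → ℝ) ℝ (Fin 2))

/-- The components `β(e_i, e_j)` of a 2-form. -/
def componentMatrix : Matrix (Fin 7) (Fin 7) ℝ := Matrix.of fun i j => β ![e i, e j]

lemma componentMatrix_transpose : (componentMatrix β)ᵀ = -componentMatrix β := by
  ext i j
  exact alternatingMap_swap β (e i) (e j)

/-- The squared norm `|β|²` of a 2-form, a sum over increasing pairs of indices. -/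
def twoFormNormSq : ℝ := ∑ a, ∑ b, if a < b then β ![e a, e b] ^ 2 else 0

/-- The 4-form `β ∧ β`. -/
def wedgeSq : (Fin 4 → Fin 7 → ℝ) → ℝ :=
  wedge22 (fun x y => β ![x, y]) (fun x y => β ![x, y])

/-- The `Λ⁴₂₇`-component `β ∧ β + (1/7) |β|² ψ` of `β ∧ β`, for `β` in `Λ²₁₄`. -/
def wedgeSq27 (v : Fin 4 → Fin 7 → ℝ) : ℝ :=
  wedgeSq β v + (1 / 7 : ℝ) * twoFormNormSq β * psi (v 0) (v 1) (v 2) (v 3)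

lemma signEquivariant_wedgeSq : SignEquivariant (wedgeSq β) :=
  signEquivariant_wedge22 _ _

lemma signEquivariant_wedgeSq27 : SignEquivariant (wedgeSq27 β) :=
  (signEquivariant_wedgeSq β).add (signEquivariant_psi.const_mul _)

lemma trace_componentMatrix_sq : (componentMatrix β ^ 2).trace = -2 * twoFormNormSq β := by
  have hvec (a b : Fin 7) : e ∘ ![a, b] = ![e a, e b] := (FinVec.map_eq e _).symm
  have hsum := ((signEquivariant_alternatingMap β).comp_left e).sum_sq_fin_two
  simp only [sum_fin_two_arrow, hvec] at hsum
  have htrace := sum_sq_eq_neg_trace_sq (componentMatrix_transpose β)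
  simp only [componentMatrix, Matrix.of_apply, hsum] at htrace
  rw [componentMatrix, twoFormNormSq]
  linarith

lemma sum_wedgeSq_mul {f : (Fin 4 → Fin 7) → ℝ} (hf : SignEquivariant f) :
    ∑ v, wedgeSq β (e ∘ v) * f v =
      6 * ∑ a, ∑ b, ∑ c, ∑ d,
        componentMatrix β a b * componentMatrix β c d * f ![a, b, c, d] := by
  refine (sum_wedge22_mul _ _ e hf).trans ?_
  rw [sum_fin_four_arrow]
  rfl

theorem sum_wedgeSq_sq :
    ∑ v : Fin 4 → Fin 7, wedgeSq β (e ∘ v) ^ 2 =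
      12 * ((componentMatrix β ^ 2).trace ^ 2 - 2 * (componentMatrix β ^ 4).trace) := by
  have hwedge (a b c d : Fin 7) : wedgeSq β (e ∘ ![a, b, c, d]) =
        2 * (componentMatrix β a b * componentMatrix β c d
          - componentMatrix β a c * componentMatrix β b d
          + componentMatrix β a d * componentMatrix β b c) :=
    wedge22_self (alternatingMap_swap β) _
  simp only [pow_two (wedgeSq _ _), hwedge,
    sum_wedgeSq_mul β ((signEquivariant_wedgeSq β).comp_left e),
    mul_left_comm _ (2 : ℝ), ← Finset.mul_sum,
    sum_mul_pfaffian (componentMatrix_transpose β)]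
  ring

variable {β}

lemma eq_zero_of_componentMatrix_eq_zero (h : componentMatrix β = 0) : β = 0 := by
  refine Module.Basis.ext_alternating (Pi.basisFun ℝ (Fin 7)) fun v _ => ?_
  have hv : (fun i => Pi.basisFun ℝ (Fin 7) (v i)) = ![e (v 0), e (v 1)] := by
    ext i
    fin_cases i <;> simp [e_eq_single]
  rw [hv, AlternatingMap.zero_apply]
  exact congrFun (congrFun h (v 0)) (v 1)

lemma eq_zero_of_twoFormNormSq_eq_zero (h : twoFormNormSq β = 0) : β = 0 := by
  have hsum := sum_sq_eq_neg_trace_sq (componentMatrix_transpose β)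
  rw [trace_componentMatrix_sq, h] at hsum
  have hmatrix : ∀ a b, componentMatrix β a b = 0 := by
    simpa [Finset.sum_eq_zero_iff_of_nonneg, Finset.sum_nonneg, sq_nonneg] using hsum
  exact eq_zero_of_componentMatrix_eq_zero (Matrix.ext hmatrix)

theorem sum_wedgeSq_mul_eps4 (hangle : angle (componentMatrix β) = 0) :
    ∑ v : Fin 4 → Fin 7, wedgeSq β (e ∘ v) * eps4 (v 0) (v 1) (v 2) (v 3) =
      -24 * twoFormNormSq β := by
  have hskew := componentMatrix_transpose β
  set B := componentMatrix β
  calc _ = 6 * ∑ a, ∑ b, B a b * ∑ c, ∑ d, B c d * psi (e a) (e b) (e c) (e d) := by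
        rw [sum_wedgeSq_mul β signEquivariant_eps4]
        simp only [Finset.mul_sum, mul_assoc]
        rfl
    _ = -12 * ∑ a, ∑ b, B a b ^ 2 := by
        simp only [sum_mul_psi_of_angle_eq_zero hskew hangle, dotProduct_e, mulVec_e,
          Finset.mul_sum]
        refine Finset.sum_congr rfl fun a _ => Finset.sum_congr rfl fun b _ => ?_
        ring
    _ = -24 * twoFormNormSq β := by
        rw [sum_sq_eq_neg_trace_sq hskew, trace_componentMatrix_sq]
        ring

theorem sum_wedgeSq27_sq (hangle : angle (componentMatrix β) = 0) :
    ∑ v : Fin 4 → Fin 7, wedgeSq27 β (e ∘ v) ^ 2 = 24 * ((6 / 7) * twoFormNormSq β ^ 2) := by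
  have hfour := four_mul_trace_pow_four (componentMatrix_transpose β) hangle
  have hsq := sum_wedgeSq_sq β
  rw [trace_componentMatrix_sq] at hfour hsq
  calc _ = ∑ v : Fin 4 → Fin 7, wedgeSq β (e ∘ v) ^ 2
        + 2 / 7 * twoFormNormSq β *
            ∑ v : Fin 4 → Fin 7, wedgeSq β (e ∘ v) * eps4 (v 0) (v 1) (v 2) (v 3)
        + (twoFormNormSq β / 7) ^ 2 * ∑ v : Fin 4 → Fin 7, eps4 (v 0) (v 1) (v 2) (v 3) ^ 2 := by
        simp only [Finset.mul_sum, ← Finset.sum_add_distrib]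
        refine Finset.sum_congr rfl fun v _ => ?_
        simp only [wedgeSq27, eps4, Function.comp_apply]
        ring
    _ = 24 * ((6 / 7) * twoFormNormSq β ^ 2) := by
        rw [sum_wedgeSq_mul_eps4 hangle, sum_eps4_sq, hsq]
        linarith

theorem sum_increasing_wedgeSq27_sq (hangle : angle (componentMatrix β) = 0) :
    (∑ a, ∑ b, ∑ c, ∑ d, if a < b ∧ b < c ∧ c < d then
      wedgeSq27 β ![e a, e b, e c, e d] ^ 2 else 0) = 6 / 7 * twoFormNormSq β ^ 2 := by
  have hvec (a b c d : Fin 7) : e ∘ ![a, b, c, d] = ![e a, e b, e c, e d] :=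
    (FinVec.map_eq e _).symm
  have hsum := ((signEquivariant_wedgeSq27 β).comp_left e).sum_sq_fin_four
  simp only [hvec, sum_wedgeSq27_sq hangle] at hsum
  linarith

end TwoForms

/-- for `β` in `Λ²₁₄`, `|β∧β + (1/7)|β|²·ψ|² = (6/7)|β|⁴`; in particular the
`Λ⁴₂₇`-component `β∧β + (1/7)|β|²·ψ` of `β∧β` vanishes only if `β = 0`. -/
theorem wedge_sq_27_component (β : AlternatingMap ℝ (Fin 7 → ℝ) ℝ (Fin 2))
    (hβ : ∀ i : Fin 7, ∑ j : Fin 7, ∑ k : Fin 7, eps i j k * β ![e j, e k] = 0) :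
    (∑ a : Fin 7, ∑ b : Fin 7, ∑ c : Fin 7, ∑ d : Fin 7,
        if a < b ∧ b < c ∧ c < d then
          (wedge22 (fun x y => β ![x, y]) (fun x y => β ![x, y]) ![e a, e b, e c, e d]
            + (1 / 7 : ℝ)
                * (∑ a' : Fin 7, ∑ b' : Fin 7, if a' < b' then (β ![e a', e b']) ^ 2 else 0)
                * psi (e a) (e b) (e c) (e d)) ^ 2
        else 0)
      = (6 / 7 : ℝ)
          * (∑ a : Fin 7, ∑ b : Fin 7, if a < b then (β ![e a, e b]) ^ 2 else 0) ^ 2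
    ∧ ((∀ x y z w : Fin 7 → ℝ,
          wedge22 (fun x' y' => β ![x', y']) (fun x' y' => β ![x', y']) ![x, y, z, w]
            + (1 / 7 : ℝ)
                * (∑ a : Fin 7, ∑ b : Fin 7, if a < b then (β ![e a, e b]) ^ 2 else 0)
                * psi x y z w = 0) → β = 0) := by
  have hangle : angle (componentMatrix β) = 0 := funext hβ
  have hnorm := sum_increasing_wedgeSq27_sq hangle
  refine ⟨hnorm, fun hzero => ?_⟩
  have hcomponent (a b c d : Fin 7) : wedgeSq27 β ![e a, e b, e c, e d] = 0 :=
    hzero (e a) (e b) (e c) (e d)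
  have hsq : twoFormNormSq β ^ 2 = 0 := by
    simpa [hcomponent] using hnorm
  exact eq_zero_of_twoFormNormSq_eq_zero (pow_eq_zero_iff two_ne_zero |>.1 hsq)

end G2

end
end

section
/- Let β be an alternating 2-form on ℝ⁷ satisfying Σ_{j,k=1}^{7} ε_{ijk} β(e_j,e_k) = 0 for every i ∈ {1,…,7}. Then there exist g ∈ GL(7,ℝ) with g*φ = φ and real numbers λ₁, λ₂ with 0 ≤ λ₁ ≤ λ₂ such that g*β = λ₁ e²∧e³ + λ₂ e⁴∧e⁵ − (λ₁+λ₂) e⁶∧e⁷. -/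
open scoped BigOperators Matrix

noncomputable section

namespace G2

/-- The 2-form `e^a ∧ e^b`, evaluated on `(x, y)`. -/
def w2 (a b : Fin 7) (x y : Fin 7 → ℝ) : ℝ := x a * y b - x b * y a

/-! Identify `β` with the skew operator `B` given by `⟨B x, y⟩ = β(x, y)`. The hypothesis says that
`∑ eᵢ × B eᵢ = 0`, which makes `B` a derivation of the octonionic cross product. A skew operator in
odd dimension kills some unit vector `u`; then `B` commutes with `u ×`, so `-(u × B ·)` is symmetric
and has orthonormal eigenvectors `v` and `w` with `w` orthogonal to `u`, `v` and `u × v`. Such a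
triple generates all of `Im 𝕆`, by Cayley–Dickson doubling, in the same way as `e₁`, `e₂`, `e₄`, so
it determines an automorphism of `φ`, and in the resulting frame `B` is block-diagonal: it acts on
`v`, `w` and `v × w` as `a u ×`, `b u ×` and `-(a + b) u ×`. Exchanging and negating the vectors of
the triple moves `(a, b)` into the Weyl chamber `0 ≤ a ≤ b`.
-/

/-- The cross product on `ℝ⁷ = Im 𝕆` defined by `⟨x × y, z⟩ = φ(x, y, z)`. -/
def cross : (Fin 7 → ℝ) →ₗ[ℝ] (Fin 7 → ℝ) →ₗ[ℝ] (Fin 7 → ℝ) :=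
  LinearMap.mk₂ ℝ (fun x y k => phi x y (e k))
    (fun x x' y => by ext k; simp only [phi, w3, Pi.add_apply]; ring)
    (fun c x y => by ext k; simp only [phi, w3, Pi.smul_apply, smul_eq_mul]; ring)
    (fun x y y' => by ext k; simp only [phi, w3, Pi.add_apply]; ring)
    (fun c x y => by ext k; simp only [phi, w3, Pi.smul_apply, smul_eq_mul]; ring)

local infixl:74 " ⨯₇ " => cross

section CrossProduct

variable (x y z : Fin 7 → ℝ)

theorem cross_eq : x ⨯₇ y =
    ![w2 1 2 x y + w2 3 4 x y + w2 5 6 x y,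
      w2 2 0 x y + w2 3 5 x y - w2 4 6 x y,
      w2 0 1 x y - w2 3 6 x y - w2 4 5 x y,
      w2 4 0 x y + w2 5 1 x y - w2 6 2 x y,
      w2 0 3 x y - w2 6 1 x y - w2 5 2 x y,
      w2 6 0 x y + w2 1 3 x y - w2 2 4 x y,
      w2 0 5 x y - w2 1 4 x y - w2 2 3 x y] := by
  ext k
  fin_cases k <;>
    simp only [cross, LinearMap.mk₂_apply, phi, w3, w2, e, Matrix.cons_val, Fin.zero_eta,
      Fin.mk_one, Fin.reduceFinMk, Fin.reduceEq, ↓reduceIte, Fin.isValue] <;>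
    ring

theorem cross_dotProduct : x ⨯₇ y ⬝ᵥ z = phi x y z := by
  simp only [cross_eq, dotProduct, Fin.sum_univ_seven, phi, w3, w2, Matrix.cons_val]
  ring

theorem cross_anticomm : -(x ⨯₇ y) = y ⨯₇ x := by
  ext k
  fin_cases k <;>
    simp only [cross_eq, w2, Pi.neg_apply, Matrix.cons_val, Fin.zero_eta, Fin.mk_one,
      Fin.reduceFinMk] <;>
    ring

theorem cross_self : x ⨯₇ x = 0 := self_eq_neg.mp (cross_anticomm x x).symm

theorem cross_dotProduct_assoc : x ⨯₇ y ⬝ᵥ z = x ⬝ᵥ y ⨯₇ z := by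
  simp only [cross_eq, dotProduct, Fin.sum_univ_seven, w2, Matrix.cons_val]
  ring

theorem dotProduct_cross_left : x ⬝ᵥ x ⨯₇ y = 0 := by
  rw [← cross_dotProduct_assoc, cross_self, zero_dotProduct]

theorem dotProduct_cross_right : y ⬝ᵥ x ⨯₇ y = 0 := by
  rw [dotProduct_comm, cross_dotProduct_assoc, cross_self, dotProduct_zero]

theorem cross_cross_self_left : x ⨯₇ (x ⨯₇ y) = (x ⬝ᵥ y) • x - (x ⬝ᵥ x) • y := by
  ext k
  fin_cases k <;>
    simp only [cross_eq, dotProduct, Fin.sum_univ_seven, w2, Pi.sub_apply, Pi.smul_apply,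
      smul_eq_mul, Matrix.cons_val, Fin.zero_eta, Fin.mk_one, Fin.reduceFinMk] <;>
    ring

theorem cross_cross_add_cross_cross : x ⨯₇ (y ⨯₇ z) + y ⨯₇ (x ⨯₇ z) =
    (y ⬝ᵥ z) • x + (x ⬝ᵥ z) • y - (2 * (x ⬝ᵥ y)) • z := by
  have h := cross_cross_self_left (x + y) z
  simp only [map_add, LinearMap.add_apply, cross_cross_self_left, add_dotProduct, dotProduct_add,
    dotProduct_comm y x] at h
  linear_combination (norm := module) h

variable {x y z}

theorem cross_cross_self_left_of_unit (hx : x ⬝ᵥ x = 1) (hxy : x ⬝ᵥ y = 0) :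
    x ⨯₇ (x ⨯₇ y) = -y := by
  rw [cross_cross_self_left, hx, hxy, zero_smul, one_smul, zero_sub]

theorem cross_cross_self_right_of_unit (hx : x ⬝ᵥ x = 1) (hyx : y ⬝ᵥ x = 0) :
    x ⨯₇ (y ⨯₇ x) = y := by
  rw [← cross_anticomm x y, map_neg, cross_cross_self_left_of_unit hx (by rwa [dotProduct_comm]),
    neg_neg]

theorem cross_cross_eq_neg_cross_cross (hx : x ⬝ᵥ z = 0) (hy : y ⬝ᵥ z = 0) :
    x ⨯₇ (y ⨯₇ z) = -(x ⬝ᵥ y) • z - x ⨯₇ y ⨯₇ z := by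
  have h := cross_cross_add_cross_cross z x y
  rw [dotProduct_comm z, dotProduct_comm z, hx, hy, ← cross_anticomm (x ⨯₇ y),
    ← cross_anticomm y z, map_neg] at h
  linear_combination (norm := module) -h

theorem cross_cross_cross_of_unit (hz : z ⬝ᵥ z = 1) (hx : x ⬝ᵥ z = 0) (hy : y ⬝ᵥ z = 0)
    (hxy : x ⨯₇ y ⬝ᵥ z = 0) : x ⨯₇ z ⨯₇ (y ⨯₇ z) = -(x ⨯₇ y) := by
  have hxzy : x ⨯₇ z ⬝ᵥ y = 0 := by
    rw [cross_dotProduct_assoc, ← cross_anticomm, dotProduct_neg, ← cross_dotProduct_assoc, hxy,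
      neg_zero]
  have hyxz : y ⨯₇ x ⬝ᵥ z = 0 := by rw [← cross_anticomm, neg_dotProduct, hxy, neg_zero]
  have hxzz : x ⨯₇ z ⬝ᵥ z = 0 := by rw [cross_dotProduct_assoc, cross_self, dotProduct_zero]
  calc x ⨯₇ z ⨯₇ (y ⨯₇ z)
      = y ⨯₇ (x ⨯₇ z) ⨯₇ z := by
        rw [cross_cross_eq_neg_cross_cross hxzz hy, hxzy, neg_zero, zero_smul, zero_sub,
          ← cross_anticomm y, map_neg, LinearMap.neg_apply, neg_neg]
    _ = -(y ⨯₇ x ⨯₇ z ⨯₇ z) := by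
        rw [cross_cross_eq_neg_cross_cross hy hx, map_sub, map_smul, LinearMap.sub_apply,
          LinearMap.smul_apply, cross_self, smul_zero, zero_sub]
    _ = z ⨯₇ (y ⨯₇ x ⨯₇ z) := cross_anticomm _ _
    _ = y ⨯₇ x := cross_cross_self_right_of_unit hz hyxz
    _ = -(x ⨯₇ y) := (cross_anticomm x y).symm

end CrossProduct

/- The operators `x ↦ ⟨a, x⟩ b - ⟨b, x⟩ a` span the skew ones, and such an operator fails to be a
derivation by an expression in which `a` and `b` enter only through `a × b`. -/
theorem bivector_derivation_defect (a b x y : Fin 7 → ℝ) :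
    ((a ⬝ᵥ x ⨯₇ y) • b - (b ⬝ᵥ x ⨯₇ y) • a) - ((a ⬝ᵥ x) • b - (b ⬝ᵥ x) • a) ⨯₇ y -
        x ⨯₇ ((a ⬝ᵥ y) • b - (b ⬝ᵥ y) • a) =
      a ⨯₇ b ⨯₇ (x ⨯₇ y) + (a ⨯₇ b ⬝ᵥ x) • y - (a ⨯₇ b ⬝ᵥ y) • x := by
  ext k
  fin_cases k <;>
    simp only [cross_eq, w2, dotProduct, Fin.sum_univ_seven, Pi.add_apply, Pi.sub_apply,
      Pi.smul_apply, smul_eq_mul, Matrix.cons_val, Fin.zero_eta, Fin.mk_one, Fin.reduceFinMk] <;>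
    ring

section Spectral

theorem exists_smul_dotProduct_smul_eq_one {ι : Type*} [Fintype ι] {x : ι → ℝ} (hx : x ≠ 0) :
    ∃ c : ℝ, (c • x) ⬝ᵥ (c • x) = 1 := by
  have hpos : 0 < x ⬝ᵥ x := by simpa using Matrix.dotProduct_self_star_pos_iff.mpr hx
  refine ⟨(√(x ⬝ᵥ x))⁻¹, ?_⟩
  rw [smul_dotProduct, dotProduct_smul, smul_smul, ← mul_inv, Real.mul_self_sqrt hpos.le,
    smul_eq_mul, inv_mul_cancel₀ hpos.ne']

theorem exists_ne_zero_apply_eq_zero_of_skew {K ι : Type*} [Field K] [NeZero (2 : K)] [Fintype ι]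
    (hι : Odd (Fintype.card ι)) {B : (ι → K) →ₗ[K] (ι → K)}
    (hB : ∀ x y, B x ⬝ᵥ y = -(x ⬝ᵥ B y)) : ∃ x ≠ 0, B x = 0 := by
  classical
  have htranspose : (LinearMap.toMatrix' B)ᵀ = -LinearMap.toMatrix' B := by
    ext i j
    simpa [LinearMap.toMatrix'_apply] using hB (Pi.single i 1) (Pi.single j 1)
  have hdet : (LinearMap.toMatrix' B).det = -(LinearMap.toMatrix' B).det := by
    conv_lhs => rw [← Matrix.det_transpose, htranspose, Matrix.det_neg, hι.neg_one_pow, neg_one_mul]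
  have hdet_zero : (LinearMap.toMatrix' B).det = 0 := by
    rw [eq_neg_iff_add_eq_zero, ← two_mul] at hdet
    exact (mul_eq_zero.mp hdet).resolve_left two_ne_zero
  obtain ⟨x, hx, hBx⟩ := Matrix.exists_mulVec_eq_zero_iff.mpr hdet_zero
  exact ⟨x, hx, by rwa [LinearMap.toMatrix'_mulVec] at hBx⟩

theorem exists_eigenvector_orthogonal {𝕜 E ι : Type*} [RCLike 𝕜] [NormedAddCommGroup E]
    [InnerProductSpace 𝕜 E] [FiniteDimensional 𝕜 E] [Fintype ι] {T : E →ₗ[𝕜] E}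
    (hT : T.IsSymmetric) {p : ι → E} (hp : ∀ i, ∃ c : 𝕜, T (p i) = c • p i)
    (hι : Fintype.card ι < Module.finrank 𝕜 E) :
    ∃ x ≠ 0, (∃ c : 𝕜, T x = c • x) ∧ ∀ i, inner 𝕜 (p i) x = 0 := by
  let W := (Submodule.span 𝕜 (Set.range p))ᗮ
  have mem_W (x : E) : x ∈ W ↔ ∀ i, inner 𝕜 (p i) x = 0 := by
    rw [← Submodule.span_singleton_le_iff_mem, ← Submodule.isOrtho_iff_le, Submodule.isOrtho_comm,
      Submodule.isOrtho_span]
    simp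
  have hTW : ∀ x ∈ W, T x ∈ W := by
    intro x hx
    refine (mem_W _).mpr fun i => ?_
    obtain ⟨c, hc⟩ := hp i
    rw [← hT, hc, inner_smul_left, (mem_W x).mp hx i, mul_zero]
  have : Nontrivial W := by
    have hdim : Module.finrank 𝕜 (Submodule.span 𝕜 (Set.range p)) + Module.finrank 𝕜 W =
        Module.finrank 𝕜 E := Submodule.finrank_add_finrank_orthogonal _
    have hspan : Module.finrank 𝕜 (Submodule.span 𝕜 (Set.range p)) ≤ Fintype.card ι :=
      finrank_range_le_card p
    exact Module.nontrivial_of_finrank_pos (R := 𝕜) (by lia)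
  obtain ⟨x, hx⟩ := (hT.restrict_invariant hTW).hasEigenvalue_iSup_of_finiteDimensional
    |>.exists_hasEigenvector
  exact ⟨x, by simpa using hx.2, ⟨_, congrArg Subtype.val hx.apply_eq_smul⟩, (mem_W x).mp x.2⟩

theorem exists_unit_eigenvector_dotProduct_eq_zero {n ι : Type*} [Fintype n] [Fintype ι]
    {S : (n → ℝ) →ₗ[ℝ] (n → ℝ)} (hS : ∀ x y, S x ⬝ᵥ y = x ⬝ᵥ S y)
    {p : ι → n → ℝ} (hp : ∀ i, ∃ c : ℝ, S (p i) = c • p i)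
    (hι : Fintype.card ι < Fintype.card n) :
    ∃ x, x ⬝ᵥ x = 1 ∧ (∃ c : ℝ, S x = c • x) ∧ ∀ i, p i ⬝ᵥ x = 0 := by
  let L := WithLp.linearEquiv 2 ℝ (n → ℝ)
  have inner_eq (x y : EuclideanSpace ℝ n) : inner ℝ x y = L x ⬝ᵥ L y := by
    rw [EuclideanSpace.inner_eq_star_dotProduct, star_trivial, dotProduct_comm]
    rfl
  have hT : (L.symm.conj S).IsSymmetric := fun x y => by
    simp only [inner_eq, LinearEquiv.conj_apply_apply, LinearEquiv.symm_symm,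
      LinearEquiv.apply_symm_apply, hS]
  obtain ⟨x, hx, ⟨c, hc⟩, horth⟩ := exists_eigenvector_orthogonal hT (p := fun i => L.symm (p i))
    (fun i => (hp i).imp fun c hc => by simp [LinearEquiv.conj_apply_apply, hc])
    (by rwa [finrank_euclideanSpace])
  have hSx : S (L x) = c • L x := by
    simpa [LinearEquiv.conj_apply_apply] using congrArg L hc
  obtain ⟨r, hr⟩ := exists_smul_dotProduct_smul_eq_one (L.map_ne_zero_iff.mpr hx)
  refine ⟨r • L x, hr, ⟨c, by rw [map_smul, hSx, smul_comm]⟩, fun i => ?_⟩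
  rw [dotProduct_smul, ← L.apply_symm_apply (p i), ← inner_eq, horth, smul_zero]

end Spectral

/- The three symmetries generate the Weyl group of `G₂`, acting on `α × α` with fundamental chamber
`0 ≤ a ≤ b`. -/
theorem exists_nonneg_le_of_symmetries {α : Type*} [AddCommGroup α] [LinearOrder α]
    [IsOrderedAddMonoid α] {P : α → α → Prop} (swap : ∀ {a b}, P a b → P b a)
    (neg : ∀ {a b}, P a b → P (-a) (-b)) (rotate : ∀ {a b}, P a b → P b (-(a + b)))
    {a b : α} (h : P a b) : ∃ a b, P a b ∧ 0 ≤ a ∧ a ≤ b := by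
  have of_nonneg {a b} (h : P a b) (ha : 0 ≤ a) (hb : 0 ≤ b) : ∃ a b, P a b ∧ 0 ≤ a ∧ a ≤ b :=
    (le_total a b).elim (fun hab => ⟨a, b, h, ha, hab⟩) fun hba => ⟨b, a, swap h, hb, hba⟩
  have of_nonpos {a b} (h : P a b) (ha : a ≤ 0) (hb : b ≤ 0) : ∃ a b, P a b ∧ 0 ≤ a ∧ a ≤ b :=
    of_nonneg (neg h) (neg_nonneg.mpr ha) (neg_nonneg.mpr hb)
  wlog hab : a ≤ b generalizing a b
  · exact this (swap h) (le_of_not_ge hab)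
  rcases le_total 0 a with ha | ha
  · exact of_nonneg h ha (ha.trans hab)
  rcases le_total b 0 with hb | hb
  · exact of_nonpos h ha hb
  rcases le_total 0 (a + b) with hc | hc
  · exact of_nonpos (rotate (swap h)) ha (by rwa [neg_nonpos, add_comm])
  · exact of_nonneg (rotate h) hb (neg_nonneg.mpr hc)

section Doubling

variable {w a b a' b' : Fin 7 → ℝ} (s s' : ℝ)

/- Cayley–Dickson doubling: `a` and `b` are to be thought of as elements of a quaternion subalgebra
orthogonal to `w`. -/
theorem double_cross_double (hw : w ⬝ᵥ w = 1) (ha : a ⬝ᵥ w = 0) (hb : b ⬝ᵥ w = 0)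
    (ha' : a' ⬝ᵥ w = 0) (hb' : b' ⬝ᵥ w = 0) (hbb' : b ⨯₇ b' ⬝ᵥ w = 0) :
    (a + s • w + b ⨯₇ w) ⨯₇ (a' + s' • w + b' ⨯₇ w) =
      (a ⨯₇ a' - b ⨯₇ b' + s • b' - s' • b) + (b ⬝ᵥ a' - a ⬝ᵥ b') • w +
        (s' • a - s • a' - a ⨯₇ b' - b ⨯₇ a') ⨯₇ w := by
  simp only [map_add, map_sub, map_smul, LinearMap.add_apply, LinearMap.sub_apply,
    LinearMap.smul_apply, cross_self, cross_cross_self_right_of_unit hw hb',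
    ← cross_anticomm a' w, ← cross_anticomm a' (b ⨯₇ w), ← cross_anticomm w (b ⨯₇ w),
    cross_cross_self_right_of_unit hw hb, cross_cross_cross_of_unit hw hb hb' hbb',
    cross_cross_eq_neg_cross_cross ha hb', cross_cross_eq_neg_cross_cross ha' hb,
    dotProduct_comm a' b, ← cross_anticomm b a', map_neg, LinearMap.neg_apply]
  module

theorem double_dotProduct_double (hw : w ⬝ᵥ w = 1) (ha : a ⬝ᵥ w = 0)
    (ha' : a' ⬝ᵥ w = 0) (hb' : b' ⬝ᵥ w = 0) (hab' : a ⨯₇ b' ⬝ᵥ w = 0) (hba' : b ⨯₇ a' ⬝ᵥ w = 0) :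
    (a + s • w + b ⨯₇ w) ⬝ᵥ (a' + s' • w + b' ⨯₇ w) = a ⬝ᵥ a' + s * s' + b ⬝ᵥ b' := by
  have hbb' : b ⨯₇ w ⬝ᵥ b' ⨯₇ w = b ⬝ᵥ b' := by
    rw [cross_dotProduct_assoc, cross_cross_self_right_of_unit hw hb']
  have hba'w : b ⨯₇ w ⬝ᵥ a' = 0 := by
    rw [cross_dotProduct_assoc, ← cross_anticomm, dotProduct_neg, ← cross_dotProduct_assoc, hba',
      neg_zero]
  simp only [add_dotProduct, dotProduct_add, smul_dotProduct, dotProduct_smul, smul_eq_mul, hw, ha,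
    hbb', hba'w, ← cross_dotProduct_assoc a, hab', dotProduct_comm w a', ha',
    dotProduct_cross_right, cross_dotProduct_assoc b w w, cross_self, dotProduct_zero]
  ring

end Doubling

section Frames

/-- The linear map sending the imaginary quaternion units to `u`, `v`, `u × v`, so that the cross
product of `ℝ³` plays the role of the product of imaginary quaternions. -/
def quaternionMap (u v : Fin 7 → ℝ) : (Fin 3 → ℝ) →ₗ[ℝ] (Fin 7 → ℝ) :=
  Fintype.linearCombination ℝ ![u, v, u ⨯₇ v]

variable {u v : Fin 7 → ℝ}

theorem quaternionMap_apply (p : Fin 3 → ℝ) :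
    quaternionMap u v p = p 0 • u + p 1 • v + p 2 • u ⨯₇ v := by
  simp [quaternionMap, Fintype.linearCombination_apply, Fin.sum_univ_three]

theorem quaternionMap_cross_quaternionMap (hu : u ⬝ᵥ u = 1) (hv : v ⬝ᵥ v = 1) (huv : u ⬝ᵥ v = 0)
    (p q : Fin 3 → ℝ) :
    quaternionMap u v p ⨯₇ quaternionMap u v q = quaternionMap u v (p ⨯₃ q) := by
  have huuv : u ⨯₇ (u ⨯₇ v) = -v := cross_cross_self_left_of_unit hu huv
  have hvuv : v ⨯₇ (u ⨯₇ v) = u := cross_cross_self_right_of_unit hv huv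
  simp only [quaternionMap_apply, map_add, map_smul, LinearMap.add_apply, LinearMap.smul_apply,
    cross_self, ← cross_anticomm u (u ⨯₇ v), ← cross_anticomm v (u ⨯₇ v), ← cross_anticomm u v,
    huuv, hvuv, cross_apply, Matrix.cons_val]
  module

theorem quaternionMap_dotProduct_quaternionMap (hu : u ⬝ᵥ u = 1) (hv : v ⬝ᵥ v = 1)
    (huv : u ⬝ᵥ v = 0) (p q : Fin 3 → ℝ) :
    quaternionMap u v p ⬝ᵥ quaternionMap u v q = p ⬝ᵥ q := by
  have huvuv : u ⨯₇ v ⬝ᵥ u ⨯₇ v = 1 := by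
    rw [cross_dotProduct_assoc, cross_cross_self_right_of_unit hv huv, hu]
  simp only [quaternionMap_apply, add_dotProduct, dotProduct_add, smul_dotProduct, dotProduct_smul,
    smul_eq_mul, hu, hv, huv, huvuv, dotProduct_comm v u, dotProduct_comm (u ⨯₇ v),
    dotProduct_cross_left, dotProduct_cross_right]
  simp only [dotProduct, Fin.sum_univ_three]
  ring

/-- Unit imaginary octonions `u`, `v`, `w`, pairwise orthogonal and with `w` orthogonal to the
quaternion subalgebra generated by `u` and `v`. -/
structure IsCayleyTriple (u v w : Fin 7 → ℝ) : Prop where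
  unit_left : u ⬝ᵥ u = 1
  unit_mid : v ⬝ᵥ v = 1
  unit_right : w ⬝ᵥ w = 1
  left_mid : u ⬝ᵥ v = 0
  left_right : u ⬝ᵥ w = 0
  mid_right : v ⬝ᵥ w = 0
  cross_right : u ⨯₇ v ⬝ᵥ w = 0

/-- The linear map sending the standard basis of `ℝ⁷` to the frame generated by `u`, `v`, `w` in
the way in which the standard basis is generated by `e₁`, `e₂`, `e₄`. -/
def frameMap (u v w : Fin 7 → ℝ) : (Fin 7 → ℝ) →ₗ[ℝ] (Fin 7 → ℝ) :=
  Fintype.linearCombination ℝ ![u, v, u ⨯₇ v, w, u ⨯₇ w, v ⨯₇ w, u ⨯₇ (v ⨯₇ w)]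

theorem frameMap_apply (u v w x : Fin 7 → ℝ) : frameMap u v w x =
    x 0 • u + x 1 • v + x 2 • u ⨯₇ v + x 3 • w + x 4 • u ⨯₇ w + x 5 • v ⨯₇ w +
      x 6 • u ⨯₇ (v ⨯₇ w) := by
  simp [frameMap, Fintype.linearCombination_apply, Fin.sum_univ_seven]

namespace IsCayleyTriple

variable {u v w : Fin 7 → ℝ}

theorem cross_mid_right (h : IsCayleyTriple u v w) : u ⨯₇ (v ⨯₇ w) = -(u ⨯₇ v ⨯₇ w) := by
  rw [cross_cross_eq_neg_cross_cross h.left_right h.mid_right, h.left_mid, neg_zero, zero_smul,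
    zero_sub]

theorem quaternionMap_dotProduct_right (h : IsCayleyTriple u v w) (p : Fin 3 → ℝ) :
    quaternionMap u v p ⬝ᵥ w = 0 := by
  simp [quaternionMap_apply, add_dotProduct, h.left_right, h.mid_right, h.cross_right]

theorem frameMap_eq_double (h : IsCayleyTriple u v w) (x : Fin 7 → ℝ) : frameMap u v w x =
    quaternionMap u v ![x 0, x 1, x 2] + x 3 • w + quaternionMap u v ![x 4, x 5, -x 6] ⨯₇ w := by
  simp only [frameMap_apply, quaternionMap_apply, h.cross_mid_right, map_add, map_smul,
    LinearMap.add_apply, LinearMap.smul_apply, Matrix.cons_val]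
  module

theorem frameMap_cross_frameMap (h : IsCayleyTriple u v w) (x y : Fin 7 → ℝ) :
    frameMap u v w x ⨯₇ frameMap u v w y = frameMap u v w (x ⨯₇ y) := by
  have quat_cross := quaternionMap_cross_quaternionMap h.unit_left h.unit_mid h.left_mid
  have quat_dot := quaternionMap_dotProduct_quaternionMap h.unit_left h.unit_mid h.left_mid
  have quat_w := h.quaternionMap_dotProduct_right
  simp only [h.frameMap_eq_double]
  rw [double_cross_double _ _ h.unit_right (quat_w _) (quat_w _) (quat_w _) (quat_w _)
    (by rw [quat_cross, quat_w])]
  simp only [quat_cross, quat_dot, ← map_add, ← map_sub, ← map_smul]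
  refine congrArg₂ (· + ·) (congrArg₂ (· + ·) (congrArg _ ?_) (congrArg (· • w) ?_))
    (congrArg (quaternionMap u v · ⨯₇ w) ?_)
  · ext i
    fin_cases i <;>
      simp only [cross_eq, cross_apply, w2, Pi.add_apply, Pi.sub_apply, Pi.smul_apply, smul_eq_mul,
        Matrix.cons_val, Fin.zero_eta, Fin.mk_one, Fin.reduceFinMk] <;>
      ring
  · simp only [cross_eq, w2, dotProduct, Fin.sum_univ_three, Matrix.cons_val]
    ring
  · ext i
    fin_cases i <;>
      simp only [cross_eq, cross_apply, w2, Pi.sub_apply, Pi.smul_apply, smul_eq_mul,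
        Matrix.cons_val, Fin.zero_eta, Fin.mk_one, Fin.reduceFinMk] <;>
      ring

theorem frameMap_dotProduct_frameMap (h : IsCayleyTriple u v w) (x y : Fin 7 → ℝ) :
    frameMap u v w x ⬝ᵥ frameMap u v w y = x ⬝ᵥ y := by
  have quat_cross := quaternionMap_cross_quaternionMap h.unit_left h.unit_mid h.left_mid
  have quat_dot := quaternionMap_dotProduct_quaternionMap h.unit_left h.unit_mid h.left_mid
  have quat_w := h.quaternionMap_dotProduct_right
  simp only [h.frameMap_eq_double]
  rw [double_dotProduct_double _ _ h.unit_right (quat_w _) (quat_w _) (quat_w _)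
    (by rw [quat_cross, quat_w]) (by rw [quat_cross, quat_w]), quat_dot, quat_dot]
  simp only [dotProduct, Fin.sum_univ_seven, Fin.sum_univ_three, Matrix.cons_val]
  ring

theorem swap (h : IsCayleyTriple u v w) : IsCayleyTriple u w v where
  unit_left := h.unit_left
  unit_mid := h.unit_right
  unit_right := h.unit_mid
  left_mid := h.left_right
  left_right := h.left_mid
  mid_right := by rw [dotProduct_comm, h.mid_right]
  cross_right := by
    rw [cross_dotProduct_assoc, ← cross_anticomm, dotProduct_neg, ← cross_dotProduct_assoc,
      h.cross_right, neg_zero]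

theorem neg_left (h : IsCayleyTriple u v w) : IsCayleyTriple (-u) v w where
  unit_left := by rw [neg_dotProduct_neg, h.unit_left]
  unit_mid := h.unit_mid
  unit_right := h.unit_right
  left_mid := by rw [neg_dotProduct, h.left_mid, neg_zero]
  left_right := by rw [neg_dotProduct, h.left_right, neg_zero]
  mid_right := h.mid_right
  cross_right := by
    rw [map_neg, LinearMap.neg_apply, neg_dotProduct, h.cross_right, neg_zero]

theorem rotate (h : IsCayleyTriple u v w) : IsCayleyTriple u w (v ⨯₇ w) where
  unit_left := h.unit_left
  unit_mid := h.unit_right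
  unit_right := by
    rw [cross_dotProduct_assoc, cross_cross_self_right_of_unit h.unit_right h.mid_right, h.unit_mid]
  left_mid := h.left_right
  left_right := by rw [← cross_dotProduct_assoc, h.cross_right]
  mid_right := dotProduct_cross_right v w
  cross_right := by
    rw [cross_dotProduct_assoc, cross_cross_self_right_of_unit h.unit_right h.mid_right, h.left_mid]

end IsCayleyTriple

end Frames

theorem exists_GL_mulVec_eq {n : Type*} [Fintype n] [DecidableEq n] {F : (n → ℝ) →ₗ[ℝ] (n → ℝ)}
    (hF : ∀ x y, F x ⬝ᵥ F y = x ⬝ᵥ y) : ∃ g : GL n ℝ, ∀ x, (g : Matrix n n ℝ) *ᵥ x = F x := by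
  have hinj : Function.Injective F := (injective_iff_map_eq_zero F).mpr fun x hx => by
    rw [← dotProduct_self_eq_zero, ← hF, hx, dotProduct_zero]
  refine ⟨Matrix.GeneralLinearGroup.toLin.symm
    (LinearMap.GeneralLinearGroup.ofLinearEquiv (LinearEquiv.ofInjectiveEndo F hinj)), fun x => ?_⟩
  rw [← Matrix.mulVecLin_apply, ← Matrix.GeneralLinearGroup.coe_toLin, MulEquiv.apply_symm_apply]
  rfl

section Derivations

theorem e_dotProduct (i : Fin 7) (x : Fin 7 → ℝ) : e i ⬝ᵥ x = x i := by
  simp [dotProduct, e]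

theorem sum_smul_e (x : Fin 7 → ℝ) : ∑ i, x i • e i = x := by
  ext j
  simp [e]

/-- Infinitesimal automorphisms of the octonions: derivations of the cross product. -/
def IsCrossDerivation (B : (Fin 7 → ℝ) →ₗ[ℝ] (Fin 7 → ℝ)) : Prop :=
  ∀ x y, B (x ⨯₇ y) = B x ⨯₇ y + x ⨯₇ B y

variable {B : (Fin 7 → ℝ) →ₗ[ℝ] (Fin 7 → ℝ)}

theorem two_smul_apply_of_skew (hB : ∀ x y, B x ⬝ᵥ y = -(x ⬝ᵥ B y)) (x : Fin 7 → ℝ) :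
    (2 : ℝ) • B x = ∑ i, ((e i ⬝ᵥ x) • B (e i) - (B (e i) ⬝ᵥ x) • e i) := by
  have hsum : ∑ i, x i • B (e i) = B x := by
    simp only [← map_smul, ← map_sum, sum_smul_e]
  simp only [hB, e_dotProduct, neg_smul, sub_neg_eq_add, Finset.sum_add_distrib, hsum, sum_smul_e,
    two_smul]

theorem two_smul_derivation_defect_of_skew (hB : ∀ x y, B x ⬝ᵥ y = -(x ⬝ᵥ B y))
    (x y : Fin 7 → ℝ) :
    (2 : ℝ) • (B (x ⨯₇ y) - B x ⨯₇ y - x ⨯₇ B y) =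
      (∑ i, e i ⨯₇ B (e i)) ⨯₇ (x ⨯₇ y) + ((∑ i, e i ⨯₇ B (e i)) ⬝ᵥ x) • y -
        ((∑ i, e i ⨯₇ B (e i)) ⬝ᵥ y) • x := by
  calc (2 : ℝ) • (B (x ⨯₇ y) - B x ⨯₇ y - x ⨯₇ B y)
      = (2 : ℝ) • B (x ⨯₇ y) - ((2 : ℝ) • B x) ⨯₇ y - x ⨯₇ ((2 : ℝ) • B y) := by
        simp only [smul_sub, map_smul, LinearMap.smul_apply]
    _ = ∑ i, (e i ⨯₇ B (e i) ⨯₇ (x ⨯₇ y) + (e i ⨯₇ B (e i) ⬝ᵥ x) • y -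
          (e i ⨯₇ B (e i) ⬝ᵥ y) • x) := by
        simp only [two_smul_apply_of_skew hB, map_sum, LinearMap.sum_apply,
          ← Finset.sum_sub_distrib, bivector_derivation_defect]
    _ = (∑ i, e i ⨯₇ B (e i)) ⨯₇ (x ⨯₇ y) + ((∑ i, e i ⨯₇ B (e i)) ⬝ᵥ x) • y -
          ((∑ i, e i ⨯₇ B (e i)) ⬝ᵥ y) • x := by
        simp only [map_sum, LinearMap.sum_apply, sum_dotProduct, Finset.sum_smul,
          Finset.sum_add_distrib, Finset.sum_sub_distrib]

theorem isCrossDerivation_of_sum_cross_eq_zero (hB : ∀ x y, B x ⬝ᵥ y = -(x ⬝ᵥ B y))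
    (hsum : ∑ i, e i ⨯₇ B (e i) = 0) : IsCrossDerivation B := by
  intro x y
  have hdefect := two_smul_derivation_defect_of_skew hB x y
  rw [hsum, map_zero, LinearMap.zero_apply, zero_dotProduct, zero_dotProduct, zero_smul, zero_smul,
    add_zero, sub_zero, smul_eq_zero, or_iff_right two_ne_zero, sub_sub, sub_eq_zero] at hdefect
  exact hdefect

end Derivations

section NormalForm

/-- A Cayley triple whose frame brings the derivation `B` into block-diagonal form: `B` vanishes on
`u` and acts on the complex lines (for the complex structure `u ×`) through `v` and `w` as
`a u ×` and `b u ×`. -/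
structure IsAdaptedTriple (B : (Fin 7 → ℝ) →ₗ[ℝ] (Fin 7 → ℝ)) (u v w : Fin 7 → ℝ) (a b : ℝ) : Prop
    extends IsCayleyTriple u v w where
  map_left : B u = 0
  map_mid : B v = a • u ⨯₇ v
  map_right : B w = b • u ⨯₇ w

/-- The skew-symmetric operator corresponding to the 2-form `a e²³ + b e⁴⁵ - (a + b) e⁶⁷`. -/
def normalFormMap (a b : ℝ) (x : Fin 7 → ℝ) : Fin 7 → ℝ :=
  ![0, -a * x 2, a * x 1, -b * x 4, b * x 3, (a + b) * x 6, -(a + b) * x 5]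

theorem normalFormMap_dotProduct (a b : ℝ) (x y : Fin 7 → ℝ) :
    normalFormMap a b x ⬝ᵥ y = a * w2 1 2 x y + b * w2 3 4 x y - (a + b) * w2 5 6 x y := by
  simp only [normalFormMap, dotProduct, Fin.sum_univ_seven, Matrix.cons_val, w2]
  ring

variable {B : (Fin 7 → ℝ) →ₗ[ℝ] (Fin 7 → ℝ)} {u v w x : Fin 7 → ℝ} {a b : ℝ}

namespace IsAdaptedTriple

theorem swap (h : IsAdaptedTriple B u v w a b) : IsAdaptedTriple B u w v b a where
  toIsCayleyTriple := h.toIsCayleyTriple.swap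
  map_left := h.map_left
  map_mid := h.map_right
  map_right := h.map_mid

theorem neg_left (h : IsAdaptedTriple B u v w a b) : IsAdaptedTriple B (-u) v w (-a) (-b) where
  toIsCayleyTriple := h.toIsCayleyTriple.neg_left
  map_left := by rw [map_neg, h.map_left, neg_zero]
  map_mid := by rw [h.map_mid, map_neg, LinearMap.neg_apply, smul_neg, neg_smul, neg_neg]
  map_right := by rw [h.map_right, map_neg, LinearMap.neg_apply, smul_neg, neg_smul, neg_neg]

theorem map_mid_cross_right (hB : IsCrossDerivation B) (h : IsAdaptedTriple B u v w a b) :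
    B (v ⨯₇ w) = -(a + b) • u ⨯₇ (v ⨯₇ w) := by
  have hvuw : v ⨯₇ (u ⨯₇ w) = -(u ⨯₇ (v ⨯₇ w)) := by
    rw [cross_cross_eq_neg_cross_cross h.mid_right h.left_right, dotProduct_comm, h.left_mid,
      ← cross_anticomm u v, map_neg, LinearMap.neg_apply, h.cross_mid_right]
    module
  rw [hB, h.map_mid, h.map_right, map_smul, map_smul, LinearMap.smul_apply, hvuw,
    h.cross_mid_right]
  module

theorem rotate (hB : IsCrossDerivation B) (h : IsAdaptedTriple B u v w a b) :
    IsAdaptedTriple B u w (v ⨯₇ w) b (-(a + b)) where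
  toIsCayleyTriple := h.toIsCayleyTriple.rotate
  map_left := h.map_left
  map_mid := h.map_right
  map_right := h.map_mid_cross_right hB

theorem map_frameMap (hB : IsCrossDerivation B) (h : IsAdaptedTriple B u v w a b) :
    B (frameMap u v w x) = frameMap u v w (normalFormMap a b x) := by
  have hcross (y) : B (u ⨯₇ y) = u ⨯₇ B y := by
    rw [hB, h.map_left, map_zero, LinearMap.zero_apply, zero_add]
  have huu {y} (hy : u ⬝ᵥ y = 0) : u ⨯₇ (u ⨯₇ y) = -y :=
    cross_cross_self_left_of_unit h.unit_left hy
  have huvw : u ⬝ᵥ v ⨯₇ w = 0 := h.toIsCayleyTriple.rotate.left_right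
  simp only [frameMap_apply, normalFormMap, map_add, map_smul, hcross, h.map_left, h.map_mid,
    h.map_right, h.map_mid_cross_right hB, huu h.left_mid, huu h.left_right, huu huvw,
    Matrix.cons_val]
  module

end IsAdaptedTriple

theorem IsCrossDerivation.exists_isAdaptedTriple (hB : IsCrossDerivation B)
    (hskew : ∀ x y, B x ⬝ᵥ y = -(x ⬝ᵥ B y)) : ∃ u v w a b, IsAdaptedTriple B u v w a b := by
  obtain ⟨u, hu, hBu⟩ : ∃ u, u ⬝ᵥ u = 1 ∧ B u = 0 := by
    obtain ⟨u, hu, hBu⟩ := exists_ne_zero_apply_eq_zero_of_skew (by decide) hskew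
    obtain ⟨c, hc⟩ := exists_smul_dotProduct_smul_eq_one hu
    exact ⟨c • u, hc, by rw [map_smul, hBu, smul_zero]⟩
  have hcomm (x) : B (u ⨯₇ x) = u ⨯₇ B x := by
    rw [hB, hBu, map_zero, LinearMap.zero_apply, zero_add]
  -- `B` is complex linear for the complex structure `u ×` on `uᗮ`, so `B` is `u ×` times a
  -- symmetric operator.
  let S : (Fin 7 → ℝ) →ₗ[ℝ] (Fin 7 → ℝ) := -(cross u ∘ₗ B)
  have S_apply (x) : S x = -(u ⨯₇ B x) := rfl
  have S_symm (x y) : S x ⬝ᵥ y = x ⬝ᵥ S y := by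
    rw [S_apply, S_apply, ← hcomm, neg_dotProduct, hskew, neg_neg, dotProduct_neg,
      ← cross_dotProduct_assoc, ← cross_anticomm u x, neg_dotProduct, neg_neg]
  have B_eq_smul_cross {x} {c : ℝ} (hc : S x = c • x) : B x = c • u ⨯₇ x := by
    have huBx : u ⬝ᵥ B x = 0 := by rw [← neg_eq_zero, ← hskew, hBu, zero_dotProduct]
    rw [← map_smul, ← hc, S_apply, map_neg, cross_cross_self_left_of_unit hu huBx, neg_neg]
  have S_u : S u = (0 : ℝ) • u := by rw [S_apply, hBu, map_zero, neg_zero, zero_smul]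
  obtain ⟨v, hv, ⟨a, hSv⟩, hv_orth⟩ := exists_unit_eigenvector_dotProduct_eq_zero S_symm
    (p := ![u]) (Fin.forall_fin_one.mpr ⟨0, S_u⟩) (by decide)
  have huv : u ⬝ᵥ v = 0 := hv_orth 0
  have S_cross : S (u ⨯₇ v) = a • u ⨯₇ v := by
    rw [S_apply, hcomm, ← map_neg, ← S_apply, hSv, map_smul]
  obtain ⟨w, hw, ⟨b, hSw⟩, hw_orth⟩ := exists_unit_eigenvector_dotProduct_eq_zero S_symm
    (p := ![u, v, u ⨯₇ v])
    (by simpa [Fin.forall_fin_succ] using ⟨⟨0, S_u⟩, ⟨a, hSv⟩, ⟨a, S_cross⟩⟩) (by decide)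
  have huw : u ⬝ᵥ w = 0 := hw_orth 0
  exact ⟨u, v, w, a, b, ⟨hu, hv, hw, huv, huw, hw_orth 1, hw_orth 2⟩, hBu,
    B_eq_smul_cross hSv, B_eq_smul_cross hSw⟩

theorem IsCrossDerivation.exists_isAdaptedTriple_nonneg_le (hB : IsCrossDerivation B)
    (hskew : ∀ x y, B x ⬝ᵥ y = -(x ⬝ᵥ B y)) :
    ∃ u v w a b, IsAdaptedTriple B u v w a b ∧ 0 ≤ a ∧ a ≤ b := by
  let P (a b : ℝ) : Prop := ∃ u v w, IsAdaptedTriple B u v w a b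
  obtain ⟨u, v, w, a, b, h⟩ := hB.exists_isAdaptedTriple hskew
  obtain ⟨a, b, ⟨u, v, w, h⟩, ha, hab⟩ := exists_nonneg_le_of_symmetries (P := P)
    (fun ⟨u, v, w, h⟩ => ⟨u, w, v, h.swap⟩) (fun ⟨u, v, w, h⟩ => ⟨-u, v, w, h.neg_left⟩)
    (fun ⟨u, v, w, h⟩ => ⟨u, w, v ⨯₇ w, h.rotate hB⟩) ⟨u, v, w, h⟩
  exact ⟨u, v, w, a, b, h, ha, hab⟩

end NormalForm

theorem alternatingMap_apply_swap {R M N : Type*} [Semiring R] [AddCommMonoid M] [Module R M]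
    [AddCommGroup N] [Module R N] (β : M [⋀^Fin 2]→ₗ[R] N) (x y : M) :
    β ![y, x] = -β ![x, y] := by
  rw [← β.map_swap ![x, y] zero_ne_one]
  congr 1
  ext i
  fin_cases i <;> rfl

theorem exists_linearMap_dotProduct_eq {K n : Type*} [CommSemiring K] [Fintype n]
    (β : (n → K) [⋀^Fin 2]→ₗ[K] K) :
    ∃ B : (n → K) →ₗ[K] (n → K), ∀ x y, B x ⬝ᵥ y = β ![x, y] := by
  classical
  let L : (n → K) →ₗ[K] (n → K) →ₗ[K] K := LinearMap.mk₂ K (fun x y => β ![x, y])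
    (fun x x' y => β.map_vecCons_add ![y] x x') (fun c x y => β.map_vecCons_smul ![y] c x)
    (fun x y y' => (β.curryLeft x).map_vecCons_add ![] y y')
    (fun c x y => (β.curryLeft x).map_vecCons_smul ![] c y)
  refine ⟨(dotProductEquiv K n).symm.toLinearMap ∘ₗ L, fun x y => ?_⟩
  exact LinearMap.congr_fun ((dotProductEquiv K n).apply_symm_apply (L x)) y

theorem sum_e_cross_map_e_eq_zero {β : (Fin 7 → ℝ) [⋀^Fin 2]→ₗ[ℝ] ℝ}
    {B : (Fin 7 → ℝ) →ₗ[ℝ] (Fin 7 → ℝ)} (hBβ : ∀ x y, B x ⬝ᵥ y = β ![x, y])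
    (hβ : ∀ i, ∑ j, ∑ k, eps i j k * β ![e j, e k] = 0) :
    ∑ j, e j ⨯₇ B (e j) = 0 := by
  ext i
  calc (∑ j, e j ⨯₇ B (e j)) i
      = ∑ j, e i ⨯₇ e j ⬝ᵥ B (e j) := by
        simp only [← e_dotProduct i, dotProduct_sum, cross_dotProduct_assoc]
    _ = ∑ j, ∑ k, eps i j k * β ![e j, e k] := by
        simp only [← hBβ, dotProduct_comm _ (e _), e_dotProduct]
        rfl
    _ = 0 := hβ i

/-- every `β` in `Λ²₁₄` is conjugate, under an element of the stabilizer of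
`φ`, to a normal form `λ₁ e²∧e³ + λ₂ e⁴∧e⁵ − (λ₁+λ₂) e⁶∧e⁷` with `0 ≤ λ₁ ≤ λ₂`.
(Indices are shifted to start at 0, so `e²∧e³` is `w2 1 2`, etc.) -/
theorem Lambda2_14_normal_form (β : AlternatingMap ℝ (Fin 7 → ℝ) ℝ (Fin 2))
    (hβ : ∀ i : Fin 7, ∑ j : Fin 7, ∑ k : Fin 7, eps i j k * β ![e j, e k] = 0) :
    ∃ g : GL (Fin 7) ℝ, ∃ lam₁ lam₂ : ℝ, 0 ≤ lam₁ ∧ lam₁ ≤ lam₂ ∧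
      (∀ x y z : Fin 7 → ℝ,
        phi ((g : Matrix (Fin 7) (Fin 7) ℝ).mulVec x)
            ((g : Matrix (Fin 7) (Fin 7) ℝ).mulVec y)
            ((g : Matrix (Fin 7) (Fin 7) ℝ).mulVec z) = phi x y z) ∧
      (∀ x y : Fin 7 → ℝ,
        β ![(g : Matrix (Fin 7) (Fin 7) ℝ).mulVec x,
            (g : Matrix (Fin 7) (Fin 7) ℝ).mulVec y]
          = lam₁ * w2 1 2 x y + lam₂ * w2 3 4 x y - (lam₁ + lam₂) * w2 5 6 x y) := by
  obtain ⟨B, hBβ⟩ := exists_linearMap_dotProduct_eq β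
  have hskew (x y) : B x ⬝ᵥ y = -(x ⬝ᵥ B y) := by
    rw [dotProduct_comm x, hBβ, hBβ, alternatingMap_apply_swap]
  have hB : IsCrossDerivation B :=
    isCrossDerivation_of_sum_cross_eq_zero hskew (sum_e_cross_map_e_eq_zero hBβ hβ)
  obtain ⟨u, v, w, a, b, h, ha, hab⟩ := hB.exists_isAdaptedTriple_nonneg_le hskew
  obtain ⟨g, hg⟩ := exists_GL_mulVec_eq h.frameMap_dotProduct_frameMap
  refine ⟨g, a, b, ha, hab, fun x y z => ?_, fun x y => ?_⟩
  · simp only [hg, ← cross_dotProduct, h.frameMap_cross_frameMap, h.frameMap_dotProduct_frameMap]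
  · rw [hg, hg, ← hBβ, h.map_frameMap hB, h.frameMap_dotProduct_frameMap, normalFormMap_dotProduct]

end G2

end
end
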